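/- arXiv:1604.01366 — 6 statements merged into one kernel-verified Lean document; each statement's English description precedes it below -/
import Mathlib

section
/- The set A = {(z,w) ∈ ℝ² : z > 0, w > 0, z + w < 1} is f-invariant: if (z,w) ∈ A then f(z,w) ∈ A. In particular, for every (z,w) ∈ A and every n ≥ 0, f^n(z,w) ∈ A. -/
open Filter Topology

/-- The restriction of the map `f(z,w) = (z(1-(z-w)), w(1+(z-w)))` to `ℝ² ⊂ ℂ²`
(`f` maps `ℝ²` into `ℝ²`). -/
noncomputable def fR : ℝ × ℝ → ℝ × ℝ :=
  fun p => (p.1 * (1 - (p.1 - p.2)), p.2 * (1 + (p.1 - p.2)))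

/-- The triangle `A = {(z,w) ∈ ℝ² : z > 0, w > 0, z + w < 1}`. -/
def A : Set (ℝ × ℝ) := {p : ℝ × ℝ | 0 < p.1 ∧ 0 < p.2 ∧ p.1 + p.2 < 1}

/-!
The coordinates of a point of `A` differ by less than `1`, so `fR` multiplies each of them by a
positive factor. Their sum drops by the square of their difference, so it stays below `1`.
-/

theorem fR_fst_add_fR_snd (p : ℝ × ℝ) :
    (fR p).1 + (fR p).2 = p.1 + p.2 - (p.1 - p.2) ^ 2 := by
  simp only [fR]
  ring

theorem fR_fst_add_fR_snd_le (p : ℝ × ℝ) : (fR p).1 + (fR p).2 ≤ p.1 + p.2 :=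
  (fR_fst_add_fR_snd p).trans_le (sub_le_self _ (sq_nonneg _))

theorem fR_fst_pos {p : ℝ × ℝ} (hp : 0 < p.1) (hsub : p.1 - p.2 < 1) : 0 < (fR p).1 :=
  mul_pos hp (sub_pos.mpr hsub)

theorem fR_snd_pos {p : ℝ × ℝ} (hp : 0 < p.2) (hsub : -1 < p.1 - p.2) : 0 < (fR p).2 :=
  mul_pos hp (neg_lt_iff_pos_add'.mp hsub)

theorem abs_fst_sub_snd_lt_one_of_mem_A {p : ℝ × ℝ} (hp : p ∈ A) : |p.1 - p.2| < 1 := by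
  obtain ⟨hfst, hsnd, hadd⟩ := hp
  exact abs_sub_lt_of_nonneg_of_lt hfst.le (by linarith) hsnd.le (by linarith)

theorem mapsTo_fR_A : Set.MapsTo fR A A := by
  intro p hp
  obtain ⟨hlower, hupper⟩ := abs_lt.mp (abs_fst_sub_snd_lt_one_of_mem_A hp)
  obtain ⟨hfst, hsnd, hadd⟩ := hp
  exact ⟨fR_fst_pos hfst hupper, fR_snd_pos hsnd hlower, (fR_fst_add_fR_snd_le p).trans_lt hadd⟩

/-- `A` is `fR`-invariant, hence invariant under all iterates. -/
theorem A_invariant :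
    (∀ p ∈ A, fR p ∈ A) ∧ (∀ p ∈ A, ∀ n : ℕ, fR^[n] p ∈ A) :=
  ⟨fun _ hp => mapsTo_fR_A hp, fun _ hp n => mapsTo_fR_A.iterate n hp⟩
end

section
/- Let (z,w) ∈ A and write (z_n, w_n) = f^n(z,w). If z ≤ w, then for all n ≥ 0 one has z_n ≤ w_n and z_n ≥ z. Symmetrically, if w ≤ z, then for all n ≥ 0 one has w_n ≤ z_n and w_n ≥ w. -/
/-!
Put `d = w - z` and `s = z + w`. One application of the map multiplies `d` by `1 - s` and replaces
`s` by `s - d²`, so `0 ≤ d` and `s ≤ 1` persist; it also multiplies `z` by `1 + d ≥ 1`, so `z`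
increases along the orbit. The map commutes with exchanging `z` and `w`, which turns the case
`w ≤ z` into the case `z ≤ w`.
-/

open Filter Topology

open Set

theorem monotone_comp_iterate_of_mapsTo {α β : Type*} [Preorder β] {f : α → α} {s : Set α}
    {g : α → β} (hf : MapsTo f s s) (hg : ∀ x ∈ s, g x ≤ g (f x)) {x : α} (hx : x ∈ s) :
    Monotone fun n : ℕ => g (f^[n] x) := by
  refine monotone_nat_of_le_succ fun n => ?_
  rw [Function.iterate_succ_apply']
  exact hg _ (hf.iterate n hx)

theorem fR_snd_sub_fst (p : ℝ × ℝ) :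
    (fR p).2 - (fR p).1 = (p.2 - p.1) * (1 - (p.1 + p.2)) := by
  simp only [fR]
  ring

theorem fR_fst_add_snd (p : ℝ × ℝ) :
    (fR p).1 + (fR p).2 = p.1 + p.2 - (p.2 - p.1) ^ 2 := by
  simp only [fR]
  ring

theorem fst_le_fR_fst {p : ℝ × ℝ} (hz : 0 ≤ p.1) (hle : p.1 ≤ p.2) : p.1 ≤ (fR p).1 :=
  le_mul_of_one_le_right hz (by linarith)

theorem commute_swap_fR : Function.Commute Prod.swap fR := by
  intro p
  ext <;> simp only [fR, Prod.fst_swap, Prod.snd_swap] <;> ring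

/-- The half `0 ≤ z ≤ w`, `z + w ≤ 1` of the closed triangle, on or above the diagonal. It is the
region on which `z` increases along orbits; the other half is its image under `Prod.swap`. -/
def upperHalfTriangle : Set (ℝ × ℝ) := {p | 0 ≤ p.1 ∧ p.1 ≤ p.2 ∧ p.1 + p.2 ≤ 1}

theorem mapsTo_fR_upperHalfTriangle : MapsTo fR upperHalfTriangle upperHalfTriangle := by
  rintro p ⟨hz, hle, hsum⟩
  refine ⟨hz.trans (fst_le_fR_fst hz hle), ?_, ?_⟩
  · rw [← sub_nonneg, fR_snd_sub_fst]
    exact mul_nonneg (sub_nonneg.2 hle) (sub_nonneg.2 hsum)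
  · rw [fR_fst_add_snd]
    exact (sub_le_self _ (sq_nonneg _)).trans hsum

theorem monotone_iterate_fR_fst {p : ℝ × ℝ} (hp : p ∈ upperHalfTriangle) :
    Monotone fun n : ℕ => (fR^[n] p).1 :=
  monotone_comp_iterate_of_mapsTo (g := Prod.fst) mapsTo_fR_upperHalfTriangle
    (fun _ hq => fst_le_fR_fst hq.1 hq.2.1) hp

theorem iterate_fR_of_mem_upperHalfTriangle {p : ℝ × ℝ} (hp : p ∈ upperHalfTriangle) (n : ℕ) :
    (fR^[n] p).1 ≤ (fR^[n] p).2 ∧ p.1 ≤ (fR^[n] p).1 :=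
  ⟨(mapsTo_fR_upperHalfTriangle.iterate n hp).2.1, monotone_iterate_fR_fst hp n.zero_le⟩

/-- Monotonicity along orbits in `A`: if `z ≤ w` then `z_n ≤ w_n` and `z_n ≥ z` for all `n`;
symmetrically if `w ≤ z`. -/
theorem orbit_monotonicity :
    ∀ p ∈ A,
      (p.1 ≤ p.2 → ∀ n : ℕ, (fR^[n] p).1 ≤ (fR^[n] p).2 ∧ p.1 ≤ (fR^[n] p).1) ∧
      (p.2 ≤ p.1 → ∀ n : ℕ, (fR^[n] p).2 ≤ (fR^[n] p).1 ∧ p.2 ≤ (fR^[n] p).2) := by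
  rintro p ⟨hz, hw, hsum⟩
  refine ⟨fun hle => iterate_fR_of_mem_upperHalfTriangle ⟨hz.le, hle, hsum.le⟩, fun hle n => ?_⟩
  have hswap : p.swap ∈ upperHalfTriangle := ⟨hw.le, hle, (add_comm p.2 p.1).trans_le hsum.le⟩
  have horbit := iterate_fR_of_mem_upperHalfTriangle hswap n
  rwa [← (commute_swap_fR.iterate_right n).eq p] at horbit
end

section
/- For every (z,w) ∈ A with z ≠ w and every n ≥ 1, writing (z_n, w_n) = f^n(z,w), one has |z_n − w_n| < 1/(|z − w|⁻¹ + n); in particular n·|z_n − w_n| < 1 for all n ≥ 1. -/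
open Filter Topology

/-!
Under `f` the difference `d = z - w` is multiplied by `1 - (z + w)`. On the whole unit square
`|1 - (z + w)| * (1 + |d|) ≤ 1`, strictly off the diagonal, so that `|d|` decreases at least as
fast as under `t ↦ t / (1 + t)`, which adds `1` to the reciprocal of `t`.
The unit square is `f`-invariant and contains `A`.
-/

section CommRing

variable {R : Type*} [CommRing R]

/-- The map `f(z,w) = (z(1-(z-w)), w(1+(z-w)))` over an arbitrary commutative ring, with `fR` as
the case of `ℝ`. -/
def polyMap (p : R × R) : R × R :=
  (p.1 * (1 - (p.1 - p.2)), p.2 * (1 + (p.1 - p.2)))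

lemma polyMap_fst_sub_snd (p : R × R) :
    (polyMap p).1 - (polyMap p).2 = (p.1 - p.2) * (1 - (p.1 + p.2)) := by
  simp only [polyMap]
  ring

variable [LinearOrder R] [IsStrictOrderedRing R] {z w : R}

lemma mul_one_sub_sub_mem_Icc (hz : z ∈ Set.Icc 0 1) (hw : w ∈ Set.Icc 0 1) :
    z * (1 - (z - w)) ∈ Set.Icc 0 1 := by
  obtain ⟨hz0, hz1⟩ := hz
  obtain ⟨hw0, hw1⟩ := hw
  refine ⟨mul_nonneg hz0 (by linarith), ?_⟩
  calc z * (1 - (z - w)) ≤ z * (2 - z) := mul_le_mul_of_nonneg_left (by linarith) hz0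
    _ = 1 - (1 - z) ^ 2 := by ring
    _ ≤ 1 := sub_le_self _ (sq_nonneg _)

lemma mapsTo_polyMap_unitSquare :
    Set.MapsTo polyMap (Set.Icc (0 : R) 1 ×ˢ Set.Icc (0 : R) 1)
      (Set.Icc (0 : R) 1 ×ˢ Set.Icc (0 : R) 1) := by
  rintro ⟨z, w⟩ ⟨hz, hw⟩
  refine ⟨mul_one_sub_sub_mem_Icc hz hw, ?_⟩
  have hsnd : w * (1 + (z - w)) = w * (1 - (w - z)) := by ring
  simpa only [polyMap, hsnd] using mul_one_sub_sub_mem_Icc hw hz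

lemma one_sub_add_mul_one_add_abs_sub_lt_one (hz : 0 ≤ z) (hw : 0 ≤ w) (hne : z ≠ w) :
    (1 - (z + w)) * (1 + |z - w|) < 1 := by
  have hd : 0 < |z - w| := abs_sub_pos.mpr hne
  have hds : |z - w| ≤ z + w := abs_sub_le_iff.mpr ⟨by linarith, by linarith⟩
  calc (1 - (z + w)) * (1 + |z - w|)
      = 1 - (z + w - |z - w|) - (z + w) * |z - w| := by ring
    _ < 1 := by linarith [mul_pos (hd.trans_le hds) hd]

lemma abs_one_sub_add_mul_one_add_abs_sub_lt_one (hz : z ∈ Set.Icc 0 1) (hw : w ∈ Set.Icc 0 1)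
    (hne : z ≠ w) : |1 - (z + w)| * (1 + |z - w|) < 1 := by
  rcases abs_choice (1 - (z + w)) with habs | habs <;> rw [habs]
  · exact one_sub_add_mul_one_add_abs_sub_lt_one hz.1 hw.1 hne
  · -- The reflection `(z, w) ↦ (1 - w, 1 - z)` fixes `z - w` and negates `1 - (z + w)`.
    have hreflect := one_sub_add_mul_one_add_abs_sub_lt_one
      (sub_nonneg.mpr hw.2) (sub_nonneg.mpr hz.2) (sub_right_injective.ne hne.symm)
    rw [sub_sub_sub_cancel_left] at hreflect
    convert hreflect using 2
    ring

end CommRing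

section Field

variable {K : Type*} [Field K] [LinearOrder K] [IsStrictOrderedRing K]

lemma abs_polyMap_fst_sub_snd_lt {p : K × K} (hp : p ∈ Set.Icc (0 : K) 1 ×ˢ Set.Icc (0 : K) 1)
    (hne : p.1 ≠ p.2) :
    |(polyMap p).1 - (polyMap p).2| < |p.1 - p.2| / (1 + |p.1 - p.2|) := by
  rw [polyMap_fst_sub_snd, abs_mul, lt_div_iff₀ (by positivity), mul_assoc]
  exact mul_lt_of_lt_one_right (abs_sub_pos.mpr hne)
    (abs_one_sub_add_mul_one_add_abs_sub_lt_one hp.1 hp.2 hne)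

lemma abs_polyMap_fst_sub_snd_le {p : K × K}
    (hp : p ∈ Set.Icc (0 : K) 1 ×ˢ Set.Icc (0 : K) 1) :
    |(polyMap p).1 - (polyMap p).2| ≤ |p.1 - p.2| / (1 + |p.1 - p.2|) := by
  by_cases hdiag : p.1 = p.2
  · simp [polyMap_fst_sub_snd, hdiag]
  · exact (abs_polyMap_fst_sub_snd_lt hp hdiag).le

lemma div_one_add_lt_one_div_add_one {t M : K} (ht : 0 ≤ t) (hM : 0 < M) (h : t < 1 / M) :
    t / (1 + t) < 1 / (M + 1) := by
  rw [lt_div_iff₀ hM] at h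
  rw [div_lt_div_iff₀ (by positivity) (by positivity)]
  linarith

lemma lt_one_div_inv_add_natCast_of_le_div_one_add {a : ℕ → K} (ha : ∀ n, 0 ≤ a n)
    (hlt : a 1 < a 0 / (1 + a 0)) (hle : ∀ n, a (n + 1) ≤ a n / (1 + a n))
    {n : ℕ} (hn : 1 ≤ n) : a n < 1 / ((a 0)⁻¹ + n) := by
  have ha_pos : 0 < a 0 :=
    (div_pos_iff_of_pos_right (by linarith [ha 0])).mp ((ha 1).trans_lt hlt)
  induction n, hn using Nat.le_induction with
  | base =>
    convert hlt using 1
    push_cast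
    field_simp
  | succ n _ ih =>
    rw [Nat.cast_succ, ← add_assoc]
    exact (hle n).trans_lt (div_one_add_lt_one_div_add_one (ha n) (by positivity) ih)

theorem rate_of_convergence_to_diagonal_general {p : K × K}
    (hp : p ∈ Set.Icc (0 : K) 1 ×ˢ Set.Icc (0 : K) 1) (hne : p.1 ≠ p.2) {n : ℕ} (hn : 1 ≤ n) :
    |(polyMap^[n] p).1 - (polyMap^[n] p).2| < 1 / (|p.1 - p.2|⁻¹ + n) ∧
      (n : K) * |(polyMap^[n] p).1 - (polyMap^[n] p).2| < 1 := by
  have hd : 0 < |p.1 - p.2| := abs_sub_pos.mpr hne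
  have hstep (k : ℕ) := abs_polyMap_fst_sub_snd_le (mapsTo_polyMap_unitSquare.iterate k hp)
  simp only [← Function.iterate_succ_apply'] at hstep
  have hrate : |(polyMap^[n] p).1 - (polyMap^[n] p).2| < 1 / (|p.1 - p.2|⁻¹ + n) :=
    lt_one_div_inv_add_natCast_of_le_div_one_add
      (a := fun k ↦ |(polyMap^[k] p).1 - (polyMap^[k] p).2|)
      (fun _ ↦ abs_nonneg _) (abs_polyMap_fst_sub_snd_lt hp hne) hstep hn
  have hn_pos : (0 : K) < n := Nat.cast_pos.mpr hn
  refine ⟨hrate, (lt_div_iff₀' hn_pos).mp (hrate.trans ?_)⟩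
  exact one_div_lt_one_div_of_lt hn_pos (lt_add_of_pos_left _ (inv_pos.mpr hd))

end Field

lemma A_subset_unitSquare : A ⊆ Set.Icc (0 : ℝ) 1 ×ˢ Set.Icc (0 : ℝ) 1 := by
  rintro ⟨z, w⟩ ⟨hz, hw, hs⟩
  exact ⟨⟨hz.le, by linarith⟩, ⟨hw.le, by linarith⟩⟩

/-- Rate of convergence to the diagonal: for `(z,w) ∈ A` with `z ≠ w` and `n ≥ 1`,
`|z_n - w_n| < 1/(|z-w|⁻¹ + n)`; in particular `n·|z_n - w_n| < 1`. -/
theorem rate_of_convergence_to_diagonal :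
    ∀ p ∈ A, p.1 ≠ p.2 → ∀ n : ℕ, 1 ≤ n →
      |(fR^[n] p).1 - (fR^[n] p).2| < 1 / (|p.1 - p.2|⁻¹ + n) ∧
      (n : ℝ) * |(fR^[n] p).1 - (fR^[n] p).2| < 1 :=
  fun _ hp hne _ hn ↦ rate_of_convergence_to_diagonal_general (A_subset_unitSquare hp) hne hn
end

section
/- Let g : ℂ² → ℂ² be g(x,y) = (x − y² + a·x^{r+1}, y − xy), where either (1) a ∈ ℂ, a ≠ 0, and r ≥ 3 is an integer, or (2) r = 2 and a ∉ {t ∈ ℝ : t ≥ 0}. Then g has a domain of attraction to the origin along the direction [1:0]: there exists a nonempty open set Ω ⊆ ℂ² with (0,0) ∈ closure(Ω) \ Ω such that for every p ∈ Ω, writing g^n(p) = (x_n, y_n), one has g^n(p) → (0,0), x_n ≠ 0 for all n, and y_n/x_n → 0 as n → ∞. -/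
open Filter Topology

/-!
If `a * c ^ r = -1`, the coordinate `u` with `x = c * u` conjugates `g` to
`(u, y) ↦ (u - u ^ (r + 1) - y ^ 2 / c, y - c * u * y)`, and the hypotheses on `a` and `r` say
precisely that `c` can be taken in the open right half-plane. Put `s = Re u` and restrict to the
cusp `|Im u| < s ^ 2`, `|y| < s ^ k`, where `2 * k ≥ r + 3` makes `y ^ 2` negligible. There one
step multiplies `s` by about `1 - s ^ r`, `Im u` by about `1 - (r + 1) * s ^ r`, and `y` by at most
`1 - Re c * s / 4`. As `r ≥ 2`, the second factor is smaller than `(1 - s ^ r) ^ 2` and the third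
smaller than `(1 - s ^ r) ^ k`, so the cusp is invariant near the origin while `s` decreases to `0`.
-/

open Asymptotics Set Function

lemma isLittleO_add_pow_succ_sub {α 𝕜 : Type*} [NormedField 𝕜] {l : Filter α} {s ε : α → 𝕜}
    (h : ε =o[l] s) (n : ℕ) :
    (fun x => (s x + ε x) ^ (n + 1) - (s x ^ (n + 1) + (n + 1) * s x ^ n * ε x))
      =o[l] fun x => s x ^ n * ε x := by
  induction n with
  | zero => simp
  | succ n ih =>
    have hremainder : (fun x => (s x + ε x) *
        ((s x + ε x) ^ (n + 1) - (s x ^ (n + 1) + (n + 1) * s x ^ n * ε x)))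
          =o[l] fun x => s x * (s x ^ n * ε x) :=
      ((isBigO_refl s l).add h.isBigO).mul_isLittleO ih
    have hsquare : (fun x => (n + 1 : 𝕜) * (ε x * (s x ^ n * ε x)))
        =o[l] fun x => s x * (s x ^ n * ε x) :=
      (h.mul_isBigO (isBigO_refl _ l)).const_mul_left _
    refine (hremainder.add hsquare).congr (fun x => ?_) (fun x => ?_)
    · push_cast; ring
    · ring

lemma tendsto_zero_of_le_of_lt_self {s : ℕ → ℝ} {ψ : ℝ → ℝ} (hψ : Continuous ψ)
    (hlt : ∀ t, 0 < t → ψ t < t) (hpos : ∀ n, 0 < s n) (hstep : ∀ n, s (n + 1) ≤ ψ (s n)) :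
    Tendsto s atTop (𝓝 0) := by
  have hanti : Antitone s :=
    antitone_nat_of_succ_le fun n => (hstep n).trans (hlt _ (hpos n)).le
  have hlim : Tendsto s atTop (𝓝 (⨅ n, s n)) :=
    tendsto_atTop_ciInf hanti ⟨0, forall_mem_range.2 fun n => (hpos n).le⟩
  have hfix : ⨅ n, s n ≤ ψ (⨅ n, s n) :=
    le_of_tendsto_of_tendsto' (hlim.comp (tendsto_add_atTop_nat 1))
      ((hψ.tendsto _).comp hlim) hstep
  have hnonneg : 0 ≤ ⨅ n, s n := Real.iInf_nonneg fun n => (hpos n).le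
  rcases hnonneg.eq_or_lt with hzero | hinf
  · rwa [← hzero] at hlim
  · exact absurd hfix (hlt _ hinf).not_ge

lemma norm_one_sub_le_one_sub_re_div_two {w : ℂ} (hw : ‖w‖ ^ 2 ≤ w.re) :
    ‖1 - w‖ ≤ 1 - w.re / 2 := by
  have hre : w.re ≤ 1 := by nlinarith [Complex.re_le_norm w]
  refine le_of_sq_le_sq ?_ (by linarith)
  calc ‖1 - w‖ ^ 2 = 1 - 2 * w.re + ‖w‖ ^ 2 := by
        simp only [Complex.sq_norm, Complex.normSq_apply, Complex.sub_re, Complex.sub_im,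
          Complex.one_re, Complex.one_im]
        ring
    _ ≤ (1 - w.re / 2) ^ 2 := by nlinarith [sq_nonneg w.re]

lemma exists_re_pos_pow_eq {z : ℂ} (hz : z ≠ 0) {n : ℕ} (harg : |z.arg| < n * (Real.pi / 2)) :
    ∃ c : ℂ, 0 < c.re ∧ c ^ n = z := by
  have hn : n ≠ 0 := by rintro rfl; simp [(abs_nonneg _).not_gt] at harg
  refine ⟨z ^ (n⁻¹ : ℂ), ?_, Complex.cpow_nat_inv_pow z hn⟩
  have hcos : 0 < Real.cos (z.arg * (n : ℝ)⁻¹) := by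
    refine Real.cos_pos_of_mem_Ioo (abs_lt.1 ?_)
    rwa [← div_eq_mul_inv, abs_div, Nat.abs_cast, div_lt_iff₀' (by positivity)]
  have hre := Complex.cpow_ofReal_re z (n : ℝ)⁻¹
  push_cast at hre
  rw [hre]
  positivity

lemma exists_re_pos_mul_pow_eq_neg_one {a : ℂ} {r : ℕ}
    (h : (a ≠ 0 ∧ 3 ≤ r) ∨ (r = 2 ∧ ¬ ∃ t : ℝ, 0 ≤ t ∧ a = (t : ℂ))) :
    ∃ c : ℂ, 0 < c.re ∧ a * c ^ r = -1 := by
  suffices ∃ z : ℂ, a * z = -1 ∧ z ≠ 0 ∧ |z.arg| < r * (Real.pi / 2) by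
    obtain ⟨z, hz, hz0, harg⟩ := this
    obtain ⟨c, hc, rfl⟩ := exists_re_pos_pow_eq hz0 harg
    exact ⟨c, hc, hz⟩
  have ha : a ≠ 0 := by
    rcases h with ⟨ha, -⟩ | ⟨-, ha⟩
    · exact ha
    · rintro rfl
      exact ha ⟨0, le_rfl, by simp⟩
  refine ⟨(-a)⁻¹, by field_simp, inv_ne_zero (neg_ne_zero.2 ha), ?_⟩
  rw [Complex.abs_arg_inv]
  rcases h with ⟨-, hr⟩ | ⟨rfl, hnonneg⟩
  · have hr' : (3 : ℝ) ≤ r := by exact_mod_cast hr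
    nlinarith [Complex.abs_arg_le_pi (-a), Real.pi_pos]
  · have harg : (-a).arg ≠ Real.pi := by
      intro hpi
      obtain ⟨hre, him⟩ := Complex.arg_eq_pi_iff.1 hpi
      rw [Complex.neg_re, neg_lt_zero] at hre
      rw [Complex.neg_im, neg_eq_zero] at him
      exact hnonneg ⟨a.re, hre.le, Complex.ext rfl him⟩
    push_cast
    rw [mul_div_cancel₀ _ two_ne_zero]
    exact abs_lt.2 ⟨Complex.neg_pi_lt_arg _, (Complex.arg_le_pi _).lt_of_ne harg⟩

/-- The map `f` attracts a nonempty open set, with the origin on its boundary, to the origin along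
the direction `[1:0]`; the direction is encoded by the slopes `y / x` of the iterates, with `x ≠ 0`
so that no slope is a junk value. -/
def HasDomainOfAttraction (f : ℂ × ℂ → ℂ × ℂ) : Prop :=
  ∃ Ω : Set (ℂ × ℂ), Ω.Nonempty ∧ IsOpen Ω ∧ ((0, 0) : ℂ × ℂ) ∈ closure Ω \ Ω ∧
    ∀ p ∈ Ω, Tendsto (fun n => f^[n] p) atTop (𝓝 (0, 0)) ∧ (∀ n : ℕ, (f^[n] p).1 ≠ 0) ∧
      Tendsto (fun n => (f^[n] p).2 / (f^[n] p).1) atTop (𝓝 0)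

lemma HasDomainOfAttraction.of_semiconj {f g : ℂ × ℂ → ℂ × ℂ} {c : ℂ} (hc : c ≠ 0)
    (hf : HasDomainOfAttraction f) (hfg : Semiconj (fun p : ℂ × ℂ => (c * p.1, p.2)) f g) :
    HasDomainOfAttraction g := by
  obtain ⟨Ω, hne, hopen, ⟨hclosure, hnotMem⟩, hattr⟩ := hf
  let σ : ℂ × ℂ ≃ₜ ℂ × ℂ := (Homeomorph.mulLeft₀ c hc).prodCongr (Homeomorph.refl ℂ)
  have hσ_zero : σ (0, 0) = (0, 0) := Prod.ext (mul_zero c) rfl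
  have hσ_iterate (n : ℕ) (p : ℂ × ℂ) : g^[n] (σ p) = σ (f^[n] p) := (hfg.iterate_right n p).symm
  refine ⟨σ '' Ω, hne.image σ, σ.isOpenMap _ hopen, ⟨?_, ?_⟩, ?_⟩
  · rw [← σ.image_closure, ← hσ_zero]
    exact mem_image_of_mem σ hclosure
  · rwa [← hσ_zero, σ.injective.mem_set_image]
  · rintro _ ⟨p, hp, rfl⟩
    obtain ⟨hlim, hfst, hratio⟩ := hattr p hp
    simp only [hσ_iterate]
    refine ⟨?_, fun n => mul_ne_zero hc (hfst n), ?_⟩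
    · exact (σ.continuous.tendsto' _ _ hσ_zero).comp hlim
    · have hslope (q : ℂ × ℂ) : (σ q).2 / (σ q).1 = c⁻¹ * (q.2 / q.1) := by
        change q.2 / (c * q.1) = c⁻¹ * (q.2 / q.1)
        field_simp
      simpa only [hslope, mul_zero] using hratio.const_mul c⁻¹

/-- The region tangent to order two to the positive real axis of the first coordinate and to order
`k` in the second. Its truncations `p.1.re < δ` are the domains of attraction constructed here, and
they are expressed through the filter `𝓝[cusp k] 0`. -/
def cusp (k : ℕ) : Set (ℂ × ℂ) :=
  {p | 0 < p.1.re ∧ |p.1.im| < p.1.re ^ 2 ∧ ‖p.2‖ < p.1.re ^ k}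

lemma isOpen_cusp (k : ℕ) : IsOpen (cusp k) := by
  have hre : Continuous fun p : ℂ × ℂ => p.1.re := by fun_prop
  have him : Continuous fun p : ℂ × ℂ => |p.1.im| := by fun_prop
  exact (isOpen_lt continuous_const hre).inter
    ((isOpen_lt him (hre.pow 2)).inter (isOpen_lt continuous_snd.norm (hre.pow k)))

lemma ofReal_mem_cusp (k : ℕ) {t : ℝ} (ht : 0 < t) : ((t : ℂ), (0 : ℂ)) ∈ cusp k :=
  ⟨by simpa, by simpa using pow_pos ht 2, by simpa using pow_pos ht k⟩

lemma tendsto_re_nhdsWithin_cusp (k : ℕ) :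
    Tendsto (fun p : ℂ × ℂ => p.1.re) (𝓝[cusp k] 0) (𝓝 0) :=
  (Complex.continuous_re.comp continuous_fst).tendsto' 0 0 rfl |>.mono_left nhdsWithin_le_nhds

lemma nhdsWithin_cusp {k : ℕ} (hk : k ≠ 0) :
    𝓝[cusp k] (0 : ℂ × ℂ) = comap (fun p : ℂ × ℂ => p.1.re) (𝓝 0) ⊓ 𝓟 (cusp k) := by
  refine le_antisymm (le_inf (tendsto_re_nhdsWithin_cusp k).le_comap inf_le_right)
    (le_inf ?_ inf_le_right)
  set l := comap (fun p : ℂ × ℂ => p.1.re) (𝓝 0) ⊓ 𝓟 (cusp k)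
  have hre : Tendsto (fun p : ℂ × ℂ => p.1.re) l (𝓝 0) := tendsto_comap.mono_left inf_le_left
  have hmem : ∀ᶠ p in l, p ∈ cusp k := mem_inf_of_right (mem_principal_self _)
  have hfst : Tendsto (fun p : ℂ × ℂ => p.1) l (𝓝 0) := by
    refine squeeze_zero_norm' ?_ (by simpa using hre.add (hre.pow 2))
    filter_upwards [hmem] with p hp
    calc ‖p.1‖ ≤ |p.1.re| + |p.1.im| := Complex.norm_le_abs_re_add_abs_im _
      _ ≤ p.1.re + p.1.re ^ 2 := by rw [abs_of_pos hp.1]; gcongr; exact hp.2.1.le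
  have hsnd : Tendsto (fun p : ℂ × ℂ => p.2) l (𝓝 0) := by
    refine squeeze_zero_norm' ?_ (by simpa [hk] using hre.pow k)
    filter_upwards [hmem] with p hp using hp.2.2.le
  exact hfst.prodMk_nhds hsnd

lemma exists_forall_re_lt_of_eventually_cusp {k : ℕ} (hk : k ≠ 0) {P : ℂ × ℂ → Prop}
    (hP : ∀ᶠ p in 𝓝[cusp k] 0, P p) :
    ∃ δ > 0, ∀ p ∈ cusp k, p.1.re < δ → P p := by
  rw [nhdsWithin_cusp hk, eventually_inf_principal, eventually_comap,
    Metric.eventually_nhds_iff] at hP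
  obtain ⟨δ, hδ, hball⟩ := hP
  refine ⟨δ, hδ, fun p hp hlt => hball ?_ p rfl hp⟩
  rwa [Real.dist_0_eq_abs, abs_of_pos hp.1]

lemma eventually_mul_re_le_cusp (k : ℕ) (A : ℝ) {ε : ℝ} (hε : 0 < ε) :
    ∀ᶠ p : ℂ × ℂ in 𝓝[cusp k] 0, A * p.1.re ≤ ε :=
  ((tendsto_re_nhdsWithin_cusp k).const_mul A).eventually_le_const (by simpa using hε)

lemma im_isBigO_cusp (k : ℕ) :
    (fun p : ℂ × ℂ => p.1.im) =O[𝓝[cusp k] 0] fun p => p.1.re ^ 2 := by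
  refine .of_norm_eventuallyLE ?_
  filter_upwards [self_mem_nhdsWithin] with p hp using hp.2.1.le

lemma snd_isBigO_cusp (k : ℕ) :
    (fun p : ℂ × ℂ => p.2) =O[𝓝[cusp k] 0] fun p => p.1.re ^ k := by
  refine .of_norm_eventuallyLE ?_
  filter_upwards [self_mem_nhdsWithin] with p hp using hp.2.2.le

lemma re_pow_isLittleO_re_pow_cusp (k : ℕ) {m n : ℕ} (hmn : m < n) :
    (fun p : ℂ × ℂ => p.1.re ^ n) =o[𝓝[cusp k] 0] fun p => p.1.re ^ m :=
  (isLittleO_pow_pow hmn).comp_tendsto (tendsto_re_nhdsWithin_cusp k)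

lemma im_isLittleO_re_cusp (k : ℕ) :
    (fun p : ℂ × ℂ => p.1.im) =o[𝓝[cusp k] 0] fun p => p.1.re := by
  simpa only [pow_one] using
    (im_isBigO_cusp k).trans_isLittleO (re_pow_isLittleO_re_pow_cusp k one_lt_two)

lemma fst_isBigO_re_cusp (k : ℕ) :
    (fun p : ℂ × ℂ => p.1) =O[𝓝[cusp k] 0] fun p => p.1.re := by
  have hsum : (fun p : ℂ × ℂ => ‖p.1.re‖ + ‖p.1.im‖) =O[𝓝[cusp k] 0] fun p => p.1.re :=
    (isBigO_refl _ _).norm_left.add (im_isLittleO_re_cusp k).isBigO.norm_left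
  refine IsBigO.trans (isBigO_of_le _ fun p => ?_) hsum
  exact (Complex.norm_le_abs_re_add_abs_im p.1).trans (le_abs_self _)

lemma fst_pow_succ_sub_isLittleO_cusp (r k : ℕ) :
    (fun p : ℂ × ℂ => p.1 ^ (r + 1) - ((p.1.re : ℂ) ^ (r + 1) +
      (r + 1) * (p.1.re : ℂ) ^ r * (p.1.im * Complex.I)))
      =o[𝓝[cusp k] 0] fun p => p.1.re ^ (r + 2) := by
  have him : (fun p : ℂ × ℂ => (p.1.im : ℂ) * Complex.I) =O[𝓝[cusp k] 0]
      fun p => p.1.re ^ 2 :=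
    (isBigO_of_le _ fun p => by simp).trans (im_isBigO_cusp k)
  have him_re : (fun p : ℂ × ℂ => (p.1.im : ℂ) * Complex.I) =o[𝓝[cusp k] 0]
      fun p => (p.1.re : ℂ) :=
    Complex.isLittleO_ofReal_right.2 <|
      (isBigO_of_le _ fun p => by simp).trans_isLittleO (im_isLittleO_re_cusp k)
  have hre : (fun p : ℂ × ℂ => (p.1.re : ℂ) ^ r) =O[𝓝[cusp k] 0] fun p => p.1.re ^ r :=
    isBigO_of_le _ fun p => by simp
  simpa only [Complex.re_add_im, pow_add] using
    (isLittleO_add_pow_succ_sub him_re r).trans_isBigO (hre.mul him)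

lemma tendsto_snd_div_fst_cusp {k : ℕ} (hk : 2 ≤ k) :
    Tendsto (fun p : ℂ × ℂ => p.2 / p.1) (𝓝[cusp k] 0) (𝓝 0) := by
  have hre_fst : (fun p : ℂ × ℂ => p.1.re) =O[𝓝[cusp k] 0] fun p => p.1 :=
    isBigO_of_le _ fun p => Complex.abs_re_le_norm p.1
  have hpow : (fun p : ℂ × ℂ => p.1.re ^ k) =o[𝓝[cusp k] 0] fun p => p.1.re := by
    simpa using re_pow_isLittleO_re_pow_cusp k hk
  exact (((snd_isBigO_cusp k).trans_isLittleO hpow).trans_isBigO hre_fst).tendsto_div_nhds_zero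

lemma hasDomainOfAttraction_of_eventually_mem_cusp {f : ℂ × ℂ → ℂ × ℂ} {k : ℕ} (hk : 2 ≤ k)
    {ψ : ℝ → ℝ} (hψ : Continuous ψ) (hlt : ∀ t, 0 < t → ψ t < t)
    (hmem : ∀ᶠ p in 𝓝[cusp k] 0, f p ∈ cusp k)
    (hre : ∀ᶠ p in 𝓝[cusp k] 0, (f p).1.re ≤ ψ p.1.re) : HasDomainOfAttraction f := by
  have hk0 : k ≠ 0 := by omega
  obtain ⟨δ, hδ, hstep⟩ := exists_forall_re_lt_of_eventually_cusp hk0 (hmem.and hre)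
  have hreal {t : ℝ} (ht : t ∈ Ioo 0 δ) :
      ((t : ℂ), (0 : ℂ)) ∈ cusp k ∩ {p | p.1.re < δ} := ⟨ofReal_mem_cusp k ht.1, ht.2⟩
  refine ⟨cusp k ∩ {p | p.1.re < δ}, ⟨_, hreal ⟨half_pos hδ, half_lt_self hδ⟩⟩,
    (isOpen_cusp k).inter (isOpen_lt (by fun_prop) continuous_const), ⟨?_, ?_⟩, fun p hp => ?_⟩
  · have hlim : Tendsto (fun t : ℝ => ((t : ℂ), (0 : ℂ))) (𝓝[>] 0) (𝓝 (0, 0)) :=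
      (Continuous.tendsto' (by fun_prop) 0 _ (by simp)).mono_left nhdsWithin_le_nhds
    exact mem_closure_of_tendsto hlim (mem_of_superset (Ioo_mem_nhdsGT hδ) fun t => hreal)
  · exact fun h => lt_irrefl _ h.1.1
  have htrap : MapsTo f (cusp k ∩ {p | p.1.re < δ}) (cusp k ∩ {p | p.1.re < δ}) :=
    fun q ⟨hq, hqδ⟩ => ⟨(hstep q hq hqδ).1, ((hstep q hq hqδ).2.trans_lt (hlt _ hq.1)).trans hqδ⟩
  have horbit (n : ℕ) : f^[n] p ∈ cusp k ∩ {p | p.1.re < δ} := htrap.iterate n hp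
  have hre_lim : Tendsto (fun n => (f^[n] p).1.re) atTop (𝓝 0) := by
    refine tendsto_zero_of_le_of_lt_self hψ hlt (fun n => (horbit n).1.1) fun n => ?_
    rw [iterate_succ_apply']
    exact (hstep _ (horbit n).1 (horbit n).2).2
  have hlim : Tendsto (fun n => f^[n] p) atTop (𝓝[cusp k] 0) := by
    rw [nhdsWithin_cusp hk0]
    exact tendsto_inf.2 ⟨tendsto_comap_iff.2 hre_lim,
      tendsto_principal.2 (Eventually.of_forall fun n => (horbit n).1)⟩
  refine ⟨tendsto_nhds_of_tendsto_nhdsWithin hlim, fun n hn => ?_,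
    (tendsto_snd_div_fst_cusp hk).comp hlim⟩
  exact (horbit n).1.1.ne' (by rw [hn, Complex.zero_re])

/-- The model map to which `g` is conjugate by `x = c * u` when `a * c ^ r = -1`; then `b = c⁻¹`,
but the estimates hold for every `b`. -/
def normalForm (b c : ℂ) (r : ℕ) (p : ℂ × ℂ) : ℂ × ℂ :=
  (p.1 - p.1 ^ (r + 1) - b * p.2 ^ 2, p.2 - c * p.1 * p.2)

lemma semiconj_normalForm {a c : ℂ} {r : ℕ} (hc : c ≠ 0) (hac : a * c ^ r = -1) :
    Semiconj (fun p : ℂ × ℂ => (c * p.1, p.2)) (normalForm c⁻¹ c r)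
      (fun q : ℂ × ℂ => (q.1 - q.2 ^ 2 + a * q.1 ^ (r + 1), q.2 - q.1 * q.2)) := by
  intro p
  have hfst : c * (p.1 - p.1 ^ (r + 1) - c⁻¹ * p.2 ^ 2) =
      c * p.1 - p.2 ^ 2 + a * (c * p.1) ^ (r + 1) := by
    linear_combination (-p.2 ^ 2) * mul_inv_cancel₀ hc - c * p.1 ^ (r + 1) * hac
  exact Prod.ext hfst rfl

section NormalForm

variable {r k : ℕ}

lemma normalForm_fst_isLittleO_cusp (b c : ℂ) (hk : r + 3 ≤ 2 * k) :
    (fun p => (normalForm b c r p).1 - (((p.1.re - p.1.re ^ (r + 1) : ℝ) : ℂ) +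
      ((1 - (r + 1) * p.1.re ^ r) * p.1.im : ℝ) * Complex.I))
      =o[𝓝[cusp k] 0] fun p => p.1.re ^ (r + 2) := by
  have hsq : (fun p : ℂ × ℂ => b * p.2 ^ 2) =o[𝓝[cusp k] 0] fun p => p.1.re ^ (r + 2) := by
    have hsnd := ((snd_isBigO_cusp k).pow 2).const_mul_left b
    simp only [← pow_mul] at hsnd
    exact hsnd.trans_isLittleO (re_pow_isLittleO_re_pow_cusp k (by omega))
  refine ((fst_pow_succ_sub_isLittleO_cusp r k).neg_left.sub hsq).congr_left fun p => ?_
  have hp := Complex.re_add_im p.1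
  simp only [normalForm]
  push_cast
  linear_combination hp

lemma normalForm_fst_re_isLittleO_cusp (b c : ℂ) (hk : r + 3 ≤ 2 * k) :
    (fun p => (normalForm b c r p).1.re - (p.1.re - p.1.re ^ (r + 1)))
      =o[𝓝[cusp k] 0] fun p => p.1.re ^ (r + 2) := by
  refine (isBigO_of_le _ fun p => ?_).trans_isLittleO
    (normalForm_fst_isLittleO_cusp b c hk)
  refine (Eq.le ?_).trans (Complex.abs_re_le_norm _)
  simp only [Complex.sub_re, Complex.add_re, Complex.ofReal_re, Complex.re_ofReal_mul,
    Complex.I_re, mul_zero, add_zero, Real.norm_eq_abs]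

lemma normalForm_fst_im_isLittleO_cusp (b c : ℂ) (hk : r + 3 ≤ 2 * k) :
    (fun p => (normalForm b c r p).1.im - (1 - (r + 1) * p.1.re ^ r) * p.1.im)
      =o[𝓝[cusp k] 0] fun p => p.1.re ^ (r + 2) := by
  refine (isBigO_of_le _ fun p => ?_).trans_isLittleO
    (normalForm_fst_isLittleO_cusp b c hk)
  refine (Eq.le ?_).trans (Complex.abs_im_le_norm _)
  simp only [Complex.sub_im, Complex.add_im, Complex.ofReal_im, Complex.im_ofReal_mul,
    Complex.I_im, mul_one, zero_add, Real.norm_eq_abs]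

lemma eventually_abs_normalForm_fst_re_sub_le (b c : ℂ) (hk : r + 3 ≤ 2 * k) :
    ∀ᶠ p in 𝓝[cusp k] 0,
      |(normalForm b c r p).1.re - (p.1.re - p.1.re ^ (r + 1))| ≤ p.1.re ^ (r + 1) / 4 := by
  have hsmall := (normalForm_fst_re_isLittleO_cusp b c hk).trans
    (re_pow_isLittleO_re_pow_cusp k (Nat.lt_succ_self (r + 1)))
  filter_upwards [hsmall.bound (c := 1 / 4) (by norm_num), self_mem_nhdsWithin] with p hp hcusp
  have hs : 0 < p.1.re := hcusp.1
  rw [Real.norm_eq_abs, Real.norm_of_nonneg (by positivity)] at hp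
  linarith

lemma eventually_mul_le_normalForm_fst_re (b c : ℂ) (hr : 2 ≤ r) (hk : r + 3 ≤ 2 * k) :
    ∀ᶠ p in 𝓝[cusp k] 0, p.1.re * (1 - 2 * p.1.re ^ 2) ≤ (normalForm b c r p).1.re := by
  filter_upwards [eventually_abs_normalForm_fst_re_sub_le b c hk,
    eventually_mul_re_le_cusp k 1 one_pos, self_mem_nhdsWithin] with p hre hle_one ⟨hs, _⟩
  have hpow : p.1.re ^ (r + 1) ≤ p.1.re ^ 3 :=
    pow_le_pow_of_le_one hs.le (by linarith) (by omega)
  linarith [(abs_le.1 hre).1, pow_pos hs 3]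

lemma eventually_abs_normalForm_fst_im_lt (b c : ℂ) (hr : 2 ≤ r) (hk : r + 3 ≤ 2 * k) :
    ∀ᶠ p in 𝓝[cusp k] 0, |(normalForm b c r p).1.im| < (normalForm b c r p).1.re ^ 2 := by
  filter_upwards [eventually_abs_normalForm_fst_re_sub_le b c hk,
    (normalForm_fst_im_isLittleO_cusp b c hk).bound (c := 1 / 4) (by norm_num),
    eventually_mul_re_le_cusp k (r + 1) one_pos,
    self_mem_nhdsWithin] with p hre him hsmall ⟨hs, hv, _⟩
  set s := p.1.re
  rw [Real.norm_eq_abs, Real.norm_of_nonneg (by positivity)] at him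
  have hr' : (2 : ℝ) ≤ r := by exact_mod_cast hr
  have hs1 : s ≤ 1 := by nlinarith
  have hpow : s ^ r ≤ s := pow_le_of_le_one hs.le hs1 (by omega)
  have hfactor : 0 ≤ 1 - (r + 1) * s ^ r := by nlinarith
  have hre_lower : s - 5 / 4 * s ^ (r + 1) ≤ (normalForm b c r p).1.re := by
    linarith [(abs_le.1 hre).1]
  have hre_nonneg : 0 ≤ s - 5 / 4 * s ^ (r + 1) := by
    rw [pow_succ]; nlinarith
  calc |(normalForm b c r p).1.im|
      ≤ |(1 - (r + 1) * s ^ r) * p.1.im| + 1 / 4 * s ^ (r + 2) := by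
        linarith [abs_sub_abs_le_abs_sub (normalForm b c r p).1.im
          ((1 - (r + 1) * s ^ r) * p.1.im)]
    _ ≤ (1 - (r + 1) * s ^ r) * s ^ 2 + 1 / 4 * s ^ (r + 2) := by
        rw [abs_mul, abs_of_nonneg hfactor]; gcongr
    _ ≤ s ^ 2 - 11 / 4 * s ^ (r + 2) := by
        rw [pow_add]; nlinarith [mul_pos (pow_pos hs r) (pow_pos hs 2)]
    _ < s ^ 2 - 5 / 2 * s ^ (r + 2) := by linarith [pow_pos hs (r + 2)]
    _ ≤ (s - 5 / 4 * s ^ (r + 1)) ^ 2 := by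
        rw [pow_succ s (r + 1)]; nlinarith [sq_nonneg (s ^ (r + 1))]
    _ ≤ (normalForm b c r p).1.re ^ 2 := by gcongr

lemma eventually_norm_one_sub_mul_fst_le_cusp (k : ℕ) {c : ℂ} (hc : 0 < c.re) :
    ∀ᶠ p : ℂ × ℂ in 𝓝[cusp k] 0, ‖1 - c * p.1‖ ≤ 1 - c.re / 4 * p.1.re := by
  have him : (fun p : ℂ × ℂ => c.im * p.1.im) =o[𝓝[cusp k] 0] fun p => p.1.re :=
    (im_isLittleO_re_cusp k).const_mul_left c.im
  have hnorm : (fun p : ℂ × ℂ => ‖c * p.1‖ ^ 2) =o[𝓝[cusp k] 0] fun p => p.1.re := by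
    simpa only [pow_one] using
      (((fst_isBigO_re_cusp k).const_mul_left c).norm_left.pow 2).trans_isLittleO
        (re_pow_isLittleO_re_pow_cusp k one_lt_two)
  filter_upwards [him.bound (half_pos hc), hnorm.bound (half_pos hc),
    self_mem_nhdsWithin] with p him hnorm ⟨hs, _⟩
  rw [Real.norm_eq_abs, Real.norm_of_nonneg hs.le] at him
  rw [Real.norm_of_nonneg (by positivity), Real.norm_of_nonneg hs.le] at hnorm
  have hre : c.re / 2 * p.1.re ≤ (c * p.1).re := by
    rw [Complex.mul_re]
    linarith [le_of_abs_le him]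
  linarith [norm_one_sub_le_one_sub_re_div_two (hnorm.trans hre)]

lemma eventually_norm_normalForm_snd_lt (b : ℂ) {c : ℂ} (hr : 2 ≤ r) (hk : r + 3 ≤ 2 * k)
    (hc : 0 < c.re) :
    ∀ᶠ p in 𝓝[cusp k] 0, ‖(normalForm b c r p).2‖ < (normalForm b c r p).1.re ^ k := by
  filter_upwards [eventually_mul_le_normalForm_fst_re b c hr hk,
    eventually_norm_one_sub_mul_fst_le_cusp k hc, eventually_mul_re_le_cusp k 2 one_pos,
    eventually_mul_re_le_cusp k (8 * k) hc,
    self_mem_nhdsWithin] with p hre hcontract hhalf hsmall ⟨hs, _, hy⟩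
  set s := p.1.re
  have hfactor : 0 < 1 - 2 * s ^ 2 := by nlinarith
  have hbernoulli : 1 - c.re / 4 * s ≤ (1 - 2 * s ^ 2) ^ k := by
    have := one_add_mul_le_pow (a := -(2 * s ^ 2)) (by linarith) k
    rw [← sub_eq_add_neg] at this
    nlinarith
  calc ‖(normalForm b c r p).2‖ = ‖p.2‖ * ‖1 - c * p.1‖ := by
        rw [← norm_mul, normalForm]; ring_nf
    _ ≤ ‖p.2‖ * (1 - 2 * s ^ 2) ^ k := by gcongr; exact hcontract.trans hbernoulli
    _ < s ^ k * (1 - 2 * s ^ 2) ^ k := by gcongr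
    _ = (s * (1 - 2 * s ^ 2)) ^ k := (mul_pow _ _ _).symm
    _ ≤ (normalForm b c r p).1.re ^ k := by gcongr

lemma hasDomainOfAttraction_normalForm (b : ℂ) {c : ℂ} (hr : 2 ≤ r) (hc : 0 < c.re) :
    HasDomainOfAttraction (normalForm b c r) := by
  have hk : r + 3 ≤ 2 * (r + 1) := by omega
  have hre := eventually_abs_normalForm_fst_re_sub_le b c hk
  refine hasDomainOfAttraction_of_eventually_mem_cusp (k := r + 1) (by omega)
    (ψ := fun s => s - s ^ (r + 1) / 2) (by fun_prop) (fun t ht => by simp [ht]) ?_ ?_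
  · filter_upwards [eventually_mul_le_normalForm_fst_re b c hr hk,
      eventually_mul_re_le_cusp (r + 1) 2 one_pos, eventually_abs_normalForm_fst_im_lt b c hr hk,
      eventually_norm_normalForm_snd_lt b hr hk hc, self_mem_nhdsWithin]
      with p hre hhalf him hsnd hp
    have hs : 0 < p.1.re := hp.1
    exact ⟨(mul_pos hs (by nlinarith)).trans_le hre, him, hsnd⟩
  · filter_upwards [hre, self_mem_nhdsWithin] with p hp ⟨hs, _⟩
    have := pow_pos hs (r + 1)
    linarith [(abs_le.1 hp).2]

end NormalForm

/-- For `g(x,y) = (x - y² + a x^{r+1}, y - xy)` with either `a ≠ 0` and `r ≥ 3`, or `r = 2` and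
`a` not a nonnegative real, there is a domain of attraction to the origin along `[1:0]`. -/
theorem g_has_domain_of_attraction (a : ℂ) (r : ℕ)
    (h : (a ≠ 0 ∧ 3 ≤ r) ∨ (r = 2 ∧ ¬ ∃ t : ℝ, 0 ≤ t ∧ a = (t : ℂ))) :
    ∃ Ω : Set (ℂ × ℂ), Ω.Nonempty ∧ IsOpen Ω ∧ ((0, 0) : ℂ × ℂ) ∈ closure Ω \ Ω ∧
      ∀ p ∈ Ω,
        Tendsto
          (fun n => (fun q : ℂ × ℂ => (q.1 - q.2 ^ 2 + a * q.1 ^ (r + 1), q.2 - q.1 * q.2))^[n] p)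
          atTop (𝓝 (0, 0)) ∧
        (∀ n : ℕ,
          ((fun q : ℂ × ℂ => (q.1 - q.2 ^ 2 + a * q.1 ^ (r + 1), q.2 - q.1 * q.2))^[n] p).1 ≠ 0) ∧
        Tendsto
          (fun n =>
            ((fun q : ℂ × ℂ => (q.1 - q.2 ^ 2 + a * q.1 ^ (r + 1), q.2 - q.1 * q.2))^[n] p).2 /
            ((fun q : ℂ × ℂ => (q.1 - q.2 ^ 2 + a * q.1 ^ (r + 1), q.2 - q.1 * q.2))^[n] p).1)
          atTop (𝓝 0) := by
  have hr : 2 ≤ r := by omega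
  obtain ⟨c, hc, hac⟩ := exists_re_pos_mul_pow_eq_neg_one h
  have hc0 : c ≠ 0 := by rintro rfl; exact hc.ne' Complex.zero_re
  exact (hasDomainOfAttraction_normalForm c⁻¹ hr hc).of_semiconj hc0 (semiconj_normalForm hc0 hac)
end

section
/- Let a ∈ ℂ with a ≠ 0 and let φ : ℂ → ℂ be φ(x) = x(1 + a·x²). Then there exists a nonempty open set U ⊆ ℂ with 0 ∈ closure(U) \ U such that for every x ∈ U, the iterates φ^n(x) converge to 0 as n → ∞. -/
open Filter Topology

/-!
If `f x = x + a x ^ (k + 1) + o(x ^ (k + 1))` at `0`, then in the coordinate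
`w = -1 / (k a x ^ k)`, which sends `0` to `∞`, the map `f` becomes `w ↦ w + 1 + o(1)`. Hence, for
large `R`, `f` pushes the points of the half-plane `R < Re w` to the right by at least `1 / 2`, so
that `w → ∞`, that is `x → 0`, along every orbit in the half-plane.
-/

lemma tendsto_zero_of_tendsto_pow_zero {α E : Type*} [NormedRing E] [NormOneClass E]
    [NormMulClass E] {l : Filter α} {y : α → E} {k : ℕ}
    (h : Tendsto (fun n => y n ^ k) l (𝓝 0)) : Tendsto y l (𝓝 0) := by
  rw [NormedAddGroup.tendsto_nhds_zero] at h ⊢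
  intro ε hε
  filter_upwards [h (ε ^ k) (pow_pos hε k)] with n hn
  exact lt_of_pow_lt_pow_left₀ k hε.le (norm_pow (y n) k ▸ hn)

lemma tendsto_iterate_atTop_of_add_le {α : Type*} {f : α → α} {h : α → ℝ} {R c : ℝ} (hc : 0 < c)
    (hstep : ∀ x, R < h x → h x + c ≤ h (f x)) {x : α} (hx : R < h x) :
    Tendsto (fun n => h (f^[n] x)) atTop atTop := by
  have hgrow (n : ℕ) : h x + n * c ≤ h (f^[n] x) := by
    induction n with
    | zero => simp
    | succ n ih =>
      rw [Function.iterate_succ_apply']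
      have hR : R < h (f^[n] x) := by linarith [mul_nonneg n.cast_nonneg hc.le]
      push_cast
      linarith [hstep _ hR]
  exact tendsto_atTop_mono hgrow
    (tendsto_atTop_add_const_left _ _ (tendsto_natCast_atTop_atTop.atTop_mul_const hc))

lemma tendsto_div_self_one_of_tendsto_sub_div_pow {𝕜 : Type*} [NormedField 𝕜] {f : 𝕜 → 𝕜} {a : 𝕜}
    {k : ℕ} (hk : k ≠ 0) (hf : Tendsto (fun x => (f x - x) / x ^ (k + 1)) (𝓝[≠] 0) (𝓝 a)) :
    Tendsto (fun x => f x / x) (𝓝[≠] 0) (𝓝 1) := by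
  have hpow : Tendsto (fun x : 𝕜 => x ^ k) (𝓝[≠] 0) (𝓝 0) :=
    (Continuous.tendsto' (by fun_prop) 0 0 (by simp [hk])).mono_left nhdsWithin_le_nhds
  have hlim := (hf.mul hpow).const_add 1
  rw [mul_zero, add_zero] at hlim
  refine hlim.congr' ?_
  filter_upwards [self_mem_nhdsWithin] with x (hx : x ≠ 0)
  field_simp
  ring

lemma tendsto_mul_one_add_mul_pow_sub_div_pow {𝕜 : Type*} [Field 𝕜] [TopologicalSpace 𝕜]
    (a : 𝕜) (k : ℕ) :
    Tendsto (fun x => (x * (1 + a * x ^ k) - x) / x ^ (k + 1)) (𝓝[≠] 0) (𝓝 a) := by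
  refine tendsto_const_nhds.congr' ?_
  filter_upwards [self_mem_nhdsWithin] with x (hx : x ≠ 0)
  field_simp
  ring

/-- The leading term `w = -1 / (k a x ^ k)` of the Fatou coordinate of a germ
`f x = x + a x ^ (k + 1) + ⋯`, normalized so that `f` becomes `w ↦ w + 1 + o(1)` near `w = ∞`.
Its value at the fixed point `0`, where it has a pole, is the junk value `0` (for `k ≠ 0`). -/
noncomputable def fatouCoord (a : ℂ) (k : ℕ) (x : ℂ) : ℂ :=
  (-(k * a) * x ^ k)⁻¹

/-- The union of the `k` attracting petals of a germ `f x = x + a x ^ (k + 1) + ⋯`: the preimage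
of the half-plane `R < Re w` under the approximate Fatou coordinate `w`. The petals are
not separated, one around each attracting direction, since only their union is needed. -/
def petals (a : ℂ) (k : ℕ) (R : ℝ) : Set ℂ :=
  {x | R < (fatouCoord a k x).re}

section Petals

variable {a : ℂ} {k : ℕ} {R : ℝ}

lemma fatouCoord_zero (hk : k ≠ 0) : fatouCoord a k 0 = 0 := by
  simp [fatouCoord, hk]

lemma fatouCoord_mul (x q : ℂ) : fatouCoord a k (x * q) = fatouCoord a k x * (q ^ k)⁻¹ := by
  simp only [fatouCoord, mul_pow, ← mul_inv, mul_assoc]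

lemma continuousAt_fatouCoord (ha : a ≠ 0) (hk : k ≠ 0) {x : ℂ} (hx : x ≠ 0) :
    ContinuousAt (fatouCoord a k) x :=
  ContinuousAt.inv₀ (by fun_prop) (by simp [ha, hk, hx])

lemma zero_notMem_petals (hk : k ≠ 0) (hR : 0 ≤ R) : (0 : ℂ) ∉ petals a k R := by
  simpa [petals, fatouCoord_zero hk] using hR

lemma isOpen_petals (ha : a ≠ 0) (hk : k ≠ 0) (hR : 0 ≤ R) : IsOpen (petals a k R) := by
  refine isOpen_iff_mem_nhds.2 fun x hx => ?_
  have hx0 : x ≠ 0 := ne_of_mem_of_not_mem hx (zero_notMem_petals hk hR)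
  have hcont : ContinuousAt (fun y => (fatouCoord a k y).re) x :=
    Complex.continuous_re.continuousAt.comp (continuousAt_fatouCoord ha hk hx0)
  exact hcont.eventually (lt_mem_nhds hx)

lemma zero_mem_closure_petals (ha : a ≠ 0) (hk : k ≠ 0) : (0 : ℂ) ∈ closure (petals a k R) := by
  -- `c` spans an attracting direction: the coordinate is positive on the ray through it.
  obtain ⟨c, hc⟩ := IsAlgClosed.exists_pow_nat_eq (-(k * a))⁻¹ (Nat.pos_of_ne_zero hk)
  have hcoord (t : ℝ) : fatouCoord a k (t * c) = ((t⁻¹ ^ k : ℝ) : ℂ) := by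
    have hka : (k * a : ℂ) ≠ 0 := by simp [ha, hk]
    rw [mul_comm, fatouCoord_mul, fatouCoord, hc, mul_inv_cancel₀ (neg_ne_zero.2 hka)]
    simp
  have hpole : Tendsto (fun t : ℝ => t⁻¹ ^ k) (𝓝[>] 0) atTop :=
    (tendsto_pow_atTop hk).comp tendsto_inv_nhdsGT_zero
  have hray : Tendsto (fun t : ℝ => (t : ℂ) * c) (𝓝[>] 0) (𝓝 0) :=
    (Continuous.tendsto' (by fun_prop) 0 0 (by simp)).mono_left nhdsWithin_le_nhds
  refine mem_closure_of_tendsto hray ?_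
  filter_upwards [hpole.eventually_gt_atTop R] with t ht
  rwa [petals, Set.mem_ofPred_eq, hcoord, Complex.ofReal_re]

lemma tendsto_nhdsNE_zero_of_tendsto_re_fatouCoord {α : Type*} {l : Filter α} {y : α → ℂ}
    (ha : a ≠ 0) (hk : k ≠ 0) (h : Tendsto (fun n => (fatouCoord a k (y n)).re) l atTop) :
    Tendsto y l (𝓝[≠] 0) := by
  have hinf : Tendsto (fun n => fatouCoord a k (y n)) l (Bornology.cobounded ℂ) :=
    tendsto_norm_atTop_iff_cobounded.1 (tendsto_atTop_mono (fun n => Complex.re_le_norm _) h)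
  have hpow : Tendsto (fun n => y n ^ k) l (𝓝 0) := by
    have hka : (-(k * a) : ℂ) ≠ 0 := by simp [ha, hk]
    have hinv := (tendsto_inv₀_cobounded.comp hinf).const_mul (-(k * a) : ℂ)⁻¹
    rw [mul_zero] at hinv
    exact hinv.congr fun n => by
      rw [Function.comp_apply, fatouCoord, inv_inv, inv_mul_cancel_left₀ hka]
  refine tendsto_nhdsWithin_iff.2 ⟨tendsto_zero_of_tendsto_pow_zero hpow, ?_⟩
  filter_upwards [h.eventually_gt_atTop 0] with n hn
  exact ne_of_mem_of_not_mem (s := petals a k 0) hn (zero_notMem_petals hk le_rfl)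

lemma tendsto_fatouCoord_sub {f : ℂ → ℂ} (ha : a ≠ 0) (hk : k ≠ 0)
    (hf : Tendsto (fun x => (f x - x) / x ^ (k + 1)) (𝓝[≠] 0) (𝓝 a)) :
    Tendsto (fun x => fatouCoord a k (f x) - fatouCoord a k x) (𝓝[≠] 0) (𝓝 1) := by
  -- With `q x = f x / x` the difference is `fatouCoord a k x * (g (q x) - g 1)`, and `q x → 1`.
  let g : ℂ → ℂ := fun z => (z ^ k)⁻¹
  have hg : HasDerivAt g (-k) 1 := by
    simpa using (hasDerivAt_pow k (1 : ℂ)).fun_inv (by simp)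
  have hslope : Tendsto (fun x => dslope g 1 (f x / x)) (𝓝[≠] 0) (𝓝 (-k)) := by
    have hcont := (continuousAt_dslope_same.2 hg.differentiableAt).tendsto
    rw [dslope_same, hg.deriv] at hcont
    exact hcont.comp (tendsto_div_self_one_of_tendsto_sub_div_pow hk hf)
  have hlim := (hf.const_mul (-(k * a) : ℂ)⁻¹).mul hslope
  have hk₀ : (k : ℂ) ≠ 0 := Nat.cast_ne_zero.2 hk
  have hone : (-(k * a) : ℂ)⁻¹ * a * -k = 1 := by field_simp
  rw [hone] at hlim
  refine hlim.congr' ?_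
  filter_upwards [self_mem_nhdsWithin] with x (hx : x ≠ 0)
  have hfx : fatouCoord a k (f x) = fatouCoord a k x * g (f x / x) := by
    rw [← fatouCoord_mul, mul_div_cancel₀ _ hx]
  have hgq : g (f x / x) = 1 + (f x / x - 1) * dslope g 1 (f x / x) := by
    rw [← smul_eq_mul, sub_smul_dslope]
    simp [g]
  rw [hfx, hgq, fatouCoord]
  field_simp
  ring

lemma exists_forall_mem_petals_add_half_le {f : ℂ → ℂ} (ha : a ≠ 0) (hk : k ≠ 0)
    (hf : Tendsto (fun x => (f x - x) / x ^ (k + 1)) (𝓝[≠] 0) (𝓝 a)) :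
    ∃ R ≥ 0, ∀ x ∈ petals a k R, (fatouCoord a k x).re + 1 / 2 ≤ (fatouCoord a k (f x)).re := by
  have hre := (Complex.continuous_re.tendsto 1).comp (tendsto_fatouCoord_sub ha hk hf)
  have hnear : ∀ᶠ x in 𝓝[≠] 0, 1 / 2 < (fatouCoord a k (f x) - fatouCoord a k x).re :=
    hre.eventually (lt_mem_nhds (by norm_num))
  have hfar : ∀ᶠ x in comap (fun x => (fatouCoord a k x).re) atTop,
      1 / 2 < (fatouCoord a k (f x) - fatouCoord a k x).re :=
    (tendsto_nhdsNE_zero_of_tendsto_re_fatouCoord ha hk tendsto_comap).eventually hnear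
  obtain ⟨R, hR, hstep⟩ := ((atTop_basis_Ioi' (0 : ℝ)).comap _).eventually_iff.1 hfar
  refine ⟨R, hR.le, fun x hx => ?_⟩
  linarith [hstep hx, Complex.sub_re (fatouCoord a k (f x)) (fatouCoord a k x)]

theorem leau_fatou_petal_general {f : ℂ → ℂ} (ha : a ≠ 0) (hk : k ≠ 0)
    (hf : Tendsto (fun x => (f x - x) / x ^ (k + 1)) (𝓝[≠] 0) (𝓝 a)) :
    ∃ U : Set ℂ, U.Nonempty ∧ IsOpen U ∧ (0 : ℂ) ∈ closure U \ U ∧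
      ∀ x ∈ U, Tendsto (fun n => f^[n] x) atTop (𝓝 0) := by
  obtain ⟨R, hR, hstep⟩ := exists_forall_mem_petals_add_half_le ha hk hf
  have hclosure : (0 : ℂ) ∈ closure (petals a k R) := zero_mem_closure_petals ha hk
  refine ⟨petals a k R, closure_nonempty_iff.1 ⟨0, hclosure⟩, isOpen_petals ha hk hR,
    ⟨hclosure, zero_notMem_petals hk hR⟩, fun x hx => ?_⟩
  have hgrow : Tendsto (fun n => (fatouCoord a k (f^[n] x)).re) atTop atTop :=
    tendsto_iterate_atTop_of_add_le one_half_pos hstep hx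
  exact (tendsto_nhdsNE_zero_of_tendsto_re_fatouCoord ha hk hgrow).mono_right nhdsWithin_le_nhds

end Petals

/-- Leau–Fatou flower theorem for `φ(x) = x(1 + a x²)` with `a ≠ 0`: there is a nonempty open
set `U ⊆ ℂ` with `0` in its boundary all of whose points converge to `0` under iteration. -/
theorem leau_fatou_petal (a : ℂ) (ha : a ≠ 0) :
    ∃ U : Set ℂ, U.Nonempty ∧ IsOpen U ∧ (0 : ℂ) ∈ closure U \ U ∧
      ∀ x ∈ U, Tendsto (fun n => (fun t : ℂ => t * (1 + a * t ^ 2))^[n] x) atTop (𝓝 0) :=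
  leau_fatou_petal_general ha two_ne_zero (tendsto_mul_one_add_mul_pow_sub_div_pow a 2)
end

section
/- Let h : ℂ² → ℂ² be h(x,y) = (x − y² + a·x³, y − xy) with a ∈ ℝ, a > 0. Then h has no domain of attraction to the origin along any direction: for every nonzero v ∈ ℂ², there is no nonempty open set Ω ⊆ ℂ² such that for every p ∈ Ω one has h^n(p) → (0,0), h^n(p) ≠ (0,0) for all sufficiently large n, and the projective classes [h^n(p)] converge to [v] in ℙ¹(ℂ). -/
open Filter Topology

/-!
Divide the increments of an orbit by `x ^ 2`: averaging (Cesàro) shows that a limiting slope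
`u = lim y / x` satisfies `u (u ^ 2 - 1) = 0`, and it excludes the direction `[0 : 1]`.

If `u ^ 2 = 1`, orbits approach the origin like `1 / n`. By Baire's theorem this is uniform on a
nonempty open set, so Cauchy's estimate gives `det D(hⁿ) = O(n⁻²)` there. But along such orbits
`det Dh = 1 - 1 / n + o(1 / n)`, so by the chain rule `n ^ (-s) = O(det D(hⁿ))` for every `s > 1`
at points where `det D(hⁿ)` never vanishes.

If `u = 0`, the quadratic part of `h` preserves `x ^ 2 - y ^ 2`, which suggests coordinates
`r ~ (x ^ 2 - y ^ 2) ^ (-1 / 2)` and `t ~ y / (2 x)`; after a correction of `r` the map reads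
`r' = r - a / r + o(1 / r²)`, `t' = t (1 - 1 / r - a / r² + o(1 / r²))`. Here `Re r` stays bounded
while `|t exp (-r / a)|` is eventually nondecreasing, so `t → 0` forces `y` to vanish, which the
orbits of generic points avoid.
-/

open Asymptotics

section Sequences

variable {𝕜 : Type*} [RCLike 𝕜]

theorem tendsto_div_natCast_of_tendsto_sub {u : ℕ → 𝕜} {l : 𝕜}
    (hu : Tendsto (fun n => u (n + 1) - u n) atTop (𝓝 l)) :
    Tendsto (fun n : ℕ => u n / n) atTop (𝓝 l) := by
  have hmean := hu.cesaro_smul.add (tendsto_const_div_atTop_nhds_zero_nat (u 0))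
  rw [add_zero] at hmean
  refine hmean.congr fun n => ?_
  rw [Finset.sum_range_sub, RCLike.real_smul_eq_coe_mul]
  push_cast
  ring

/- If `s → l`, the increments of `(s - l) t` tend to `b`, hence so does `(s - l) t / n`; but `t / n`
is bounded. -/
theorem eq_zero_of_tendsto_sub_mul {s t : ℕ → 𝕜} {b c l : 𝕜} (hs : Tendsto s atTop (𝓝 l))
    (ht : Tendsto (fun n => t (n + 1) - t n) atTop (𝓝 c))
    (hst : Tendsto (fun n => (s (n + 1) - s n) * t n) atTop (𝓝 b)) : b = 0 := by
  have hs₀ : Tendsto (fun n => s n - l) atTop (𝓝 0) := by simpa using hs.sub_const l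
  have hinc : Tendsto (fun n => (s (n + 1) - l) * t (n + 1) - (s n - l) * t n) atTop (𝓝 b) := by
    have := ((hs₀.comp (tendsto_add_atTop_nat 1)).mul ht).add hst
    simp only [zero_mul, zero_add] at this
    exact this.congr fun n => by simp only [Function.comp_apply]; ring
  have hb := tendsto_div_natCast_of_tendsto_sub (u := fun n => (s n - l) * t n) hinc
  have h0 := hs₀.mul (tendsto_div_natCast_of_tendsto_sub ht)
  rw [zero_mul] at h0
  exact tendsto_nhds_unique hb (h0.congr fun n => (mul_div_assoc _ _ _).symm)

variable {x y : ℕ → 𝕜} {A B u : 𝕜}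

theorem tendsto_succ_div_of_tendsto_sub_div_sq (hx : ∀ᶠ n in atTop, x n ≠ 0)
    (hx₀ : Tendsto x atTop (𝓝 0))
    (hA : Tendsto (fun n => (x (n + 1) - x n) / x n ^ 2) atTop (𝓝 A)) :
    Tendsto (fun n => x (n + 1) / x n) atTop (𝓝 1) := by
  have h := (hx₀.mul hA).const_add 1
  rw [zero_mul, add_zero] at h
  refine h.congr' ?_
  filter_upwards [hx] with n hn
  field_simp
  ring

theorem tendsto_inv_sub_inv_of_tendsto_sub_div_sq (hx : ∀ᶠ n in atTop, x n ≠ 0)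
    (hx₀ : Tendsto x atTop (𝓝 0))
    (hA : Tendsto (fun n => (x (n + 1) - x n) / x n ^ 2) atTop (𝓝 A)) :
    Tendsto (fun n => (x (n + 1))⁻¹ - (x n)⁻¹) atTop (𝓝 (-A)) := by
  have h := hA.neg.div (tendsto_succ_div_of_tendsto_sub_div_sq hx hx₀ hA) one_ne_zero
  rw [div_one] at h
  refine h.congr' ?_
  filter_upwards [hx, (tendsto_add_atTop_nat 1).eventually hx] with n hn hn'
  simp only [Pi.div_apply]
  field_simp
  ring

theorem tendsto_natCast_mul_of_tendsto_sub_div_sq (hx : ∀ᶠ n in atTop, x n ≠ 0)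
    (hx₀ : Tendsto x atTop (𝓝 0))
    (hA : Tendsto (fun n => (x (n + 1) - x n) / x n ^ 2) atTop (𝓝 A)) (hA₀ : A ≠ 0) :
    Tendsto (fun n : ℕ => n * x n) atTop (𝓝 (-A)⁻¹) :=
  ((tendsto_div_natCast_of_tendsto_sub (tendsto_inv_sub_inv_of_tendsto_sub_div_sq hx hx₀ hA)).inv₀
    (neg_ne_zero.2 hA₀)).congr fun n => by rw [inv_div, div_inv_eq_mul]

theorem eq_mul_of_tendsto_sub_div_sq (hx : ∀ᶠ n in atTop, x n ≠ 0) (hx₀ : Tendsto x atTop (𝓝 0))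
    (hu : Tendsto (fun n => y n / x n) atTop (𝓝 u))
    (hA : Tendsto (fun n => (x (n + 1) - x n) / x n ^ 2) atTop (𝓝 A))
    (hB : Tendsto (fun n => (y (n + 1) - y n) / x n ^ 2) atTop (𝓝 B)) : B = u * A := by
  refine sub_eq_zero.1 (eq_zero_of_tendsto_sub_mul (t := fun n => (x n)⁻¹) hu
    (tendsto_inv_sub_inv_of_tendsto_sub_div_sq hx hx₀ hA) ?_)
  have h := (hB.sub (hu.mul hA)).div (tendsto_succ_div_of_tendsto_sub_div_sq hx hx₀ hA) one_ne_zero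
  rw [div_one] at h
  refine h.congr' ?_
  filter_upwards [hx, (tendsto_add_atTop_nat 1).eventually hx] with n hn hn'
  simp only [Pi.div_apply]
  field_simp
  ring

theorem one_le_one_add_inv_rpow_mul_one_sub_div {x c p : ℝ} (hx : 0 < x) (hp : 1 ≤ p) (hcp : c < p)
    (hcx : p * c / (p - c) ≤ x) : 1 ≤ (1 + x⁻¹) ^ p * (1 - c / x) := by
  have hbernoulli : 1 + p * x⁻¹ ≤ (1 + x⁻¹) ^ p :=
    one_add_mul_self_le_rpow_one_add (by linarith [inv_pos.2 hx]) hp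
  have hone : 1 ≤ (1 + p * x⁻¹) * (1 - c / x) := by
    rw [div_le_iff₀ (sub_pos.2 hcp)] at hcx
    have hexpand : (1 + p * x⁻¹) * (1 - c / x) = 1 + (x * (p - c) - p * c) / x ^ 2 := by
      field_simp
      ring
    rw [hexpand, le_add_iff_nonneg_right]
    exact div_nonneg (by linarith) (by positivity)
  have hfactor : 0 < 1 - c / x := by
    have hpos : 0 < 1 + p * x⁻¹ := by positivity
    exact pos_of_mul_pos_right (one_pos.trans_le hone) hpos.le
  exact hone.trans (by gcongr)

/- `n ^ p * d n` is eventually nondecreasing. -/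
theorem rpow_neg_isBigO_of_mul_one_sub_le {d : ℕ → ℝ} {c p : ℝ} (hp : 1 ≤ p) (hcp : c < p)
    (hd₀ : ∀ᶠ n in atTop, 0 < d n) (hd : ∀ᶠ n : ℕ in atTop, d n * (1 - c / n) ≤ d (n + 1)) :
    (fun n : ℕ => (n : ℝ) ^ (-p)) =O[atTop] d := by
  have hlarge : ∀ᶠ n : ℕ in atTop, p * c / (p - c) ≤ n :=
    tendsto_natCast_atTop_atTop.eventually_ge_atTop _
  obtain ⟨N, hN⟩ := eventually_atTop.1 (hd₀.and (hd.and (hlarge.and (eventually_gt_atTop 0))))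
  have hmono : ∀ n ≥ N, (N : ℝ) ^ p * d N ≤ (n : ℝ) ^ p * d n := by
    intro n hn
    induction n, hn using Nat.le_induction with
    | base => exact le_rfl
    | succ n hn ih =>
      obtain ⟨hpos, hstep, hbig, hn₀⟩ := hN n hn
      have hn₀' : (0 : ℝ) < n := Nat.cast_pos.2 hn₀
      calc (N : ℝ) ^ p * d N ≤ n ^ p * d n := ih
        _ ≤ n ^ p * d n * ((1 + (n : ℝ)⁻¹) ^ p * (1 - c / n)) :=
          le_mul_of_one_le_right (by positivity)
            (one_le_one_add_inv_rpow_mul_one_sub_div hn₀' hp hcp hbig)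
        _ = (n * (1 + (n : ℝ)⁻¹)) ^ p * (d n * (1 - c / n)) := by
          rw [Real.mul_rpow (by positivity) (by positivity)]
          ring
        _ = ((n + 1 : ℕ) : ℝ) ^ p * (d n * (1 - c / n)) := by
          rw [mul_add, mul_one, mul_inv_cancel₀ hn₀'.ne', Nat.cast_succ]
        _ ≤ ((n + 1 : ℕ) : ℝ) ^ p * d (n + 1) := by gcongr
  have hN₀ : 0 < (N : ℝ) ^ p * d N :=
    mul_pos (Real.rpow_pos_of_pos (Nat.cast_pos.2 (hN N le_rfl).2.2.2) p) (hN N le_rfl).1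
  refine IsBigO.of_bound ((N : ℝ) ^ p * d N)⁻¹ ?_
  filter_upwards [eventually_ge_atTop N] with n hn
  have hn₀ : (0 : ℝ) < n := Nat.cast_pos.2 (hN n hn).2.2.2
  rw [Real.norm_of_nonneg (by positivity), Real.norm_of_nonneg (hN n hn).1.le, Real.rpow_neg hn₀.le,
    le_inv_mul_iff₀ hN₀, ← div_eq_mul_inv, div_le_iff₀ (by positivity), mul_comm (d n)]
  exact hmono n hn

end Sequences

theorem isLittleO_of_continuousAt_of_eq_mul {ι 𝕜 E : Type*} [NormedField 𝕜] [TopologicalSpace E]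
    {l : Filter ι} {f g : ι → 𝕜} {p : ι → E} {p₀ : E} (F : E → 𝕜) (hp : Tendsto p l (𝓝 p₀))
    (hF : ContinuousAt F p₀) (hF₀ : F p₀ = 0) (h : ∀ᶠ n in l, f n = F (p n) * g n) : f =o[l] g :=
  isLittleO_iff_exists_eq_mul.2 ⟨F ∘ p, hF₀ ▸ hF.tendsto.comp hp, h⟩

theorem inv_sub_one_sub_half_isBigO {ι 𝕜 : Type*} [RCLike 𝕜] {l : Filter ι} {ρ ε : ι → 𝕜}
    (hρ : Tendsto ρ l (𝓝 1)) (hε : ∀ᶠ n in l, ρ n ^ 2 = 1 + ε n) :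
    (fun n => (ρ n)⁻¹ - (1 - ε n / 2)) =O[l] fun n => ε n ^ 2 := by
  have hcont : ContinuousAt (fun z : 𝕜 => (z + 2) / (2 * z * (1 + z) ^ 2)) 1 := by
    fun_prop (disch := norm_num)
  refine isBigO_iff_exists_eq_mul.2 ⟨_, (hcont.tendsto.comp hρ).norm.isBoundedUnder_le, ?_⟩
  filter_upwards [hε, hρ.eventually_ne one_ne_zero,
    (hρ.const_add 1).eventually_ne (show (1 : 𝕜) + 1 ≠ 0 by norm_num)] with n hn h₀ h₁
  simp only [Function.comp_apply, Pi.mul_apply]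
  rw [eq_sub_of_add_eq' hn.symm]
  field_simp
  ring

section NormalForm

theorem eventually_norm_le_norm_succ {P δ : ℕ → ℂ} {c : ℂ} (hc : 0 < c.re)
    (hδ : Tendsto (fun n : ℕ => n * δ n) atTop (𝓝 c))
    (hP : ∀ᶠ n in atTop, P (n + 1) = P n * (1 + δ n)) : ∀ᶠ n in atTop, ‖P n‖ ≤ ‖P (n + 1)‖ := by
  have hre := ((Complex.continuous_re.tendsto c).comp hδ).eventually_const_lt hc
  filter_upwards [hre, hP] with n hn hPn
  rw [Function.comp_apply, ← Complex.ofReal_natCast, Complex.re_ofReal_mul] at hn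
  have hone : 1 ≤ ‖1 + δ n‖ := calc
    1 ≤ (1 + δ n).re := by
      simpa using (pos_of_mul_pos_right hn n.cast_nonneg).le
    _ ≤ ‖1 + δ n‖ := Complex.re_le_norm _
  rw [hPn, norm_mul]
  exact le_mul_of_one_le_right (norm_nonneg _) hone

theorem not_tendsto_zero_of_norm_le_norm_succ {E : Type*} [NormedAddCommGroup E] {P : ℕ → E}
    (hP₀ : ∀ᶠ n in atTop, P n ≠ 0) (hP : ∀ᶠ n in atTop, ‖P n‖ ≤ ‖P (n + 1)‖) :
    ¬ Tendsto P atTop (𝓝 0) := by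
  intro hlim
  obtain ⟨N, hN⟩ := eventually_atTop.1 (hP₀.and hP)
  have hmono : ∀ n ≥ N, ‖P N‖ ≤ ‖P n‖ := fun n hn =>
    Nat.le_induction le_rfl (fun k hk ih => ih.trans (hN k hk).2) n hn
  have hle : ‖P N‖ ≤ 0 :=
    ge_of_tendsto (tendsto_zero_iff_norm_tendsto_zero.1 hlim) (eventually_atTop.2 ⟨N, hmono⟩)
  exact (hN N le_rfl).1 (norm_le_zero_iff.1 hle)

variable {r : ℕ → ℂ}

theorem tendsto_sq_div_natCast {a : ℂ} (hr : Tendsto r atTop (Bornology.cobounded ℂ))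
    (h : (fun n => r (n + 1) - (r n - a / r n)) =o[atTop] fun n => (r n)⁻¹) :
    Tendsto (fun n : ℕ => r n ^ 2 / n) atTop (𝓝 (-2 * a)) := by
  obtain ⟨φ, hφ, hrφ⟩ := isLittleO_iff_exists_eq_mul.1 h
  have hinv : Tendsto (fun n => (r n)⁻¹) atTop (𝓝 0) := tendsto_inv₀_cobounded.comp hr
  refine tendsto_div_natCast_of_tendsto_sub ?_
  have hlim := ((hφ.sub_const a).const_mul 2).add (((hφ.sub_const a).mul hinv).pow 2)
  have heq : 2 * (0 - a) + ((0 - a) * 0) ^ 2 = -2 * a := by ring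
  rw [heq] at hlim
  refine hlim.congr' ?_
  filter_upwards [hrφ, hr.eventually_ne_cobounded 0] with n hn hn₀
  have hstep : r (n + 1) = r n + (φ n - a) * (r n)⁻¹ := by
    rw [Pi.mul_apply] at hn
    linear_combination hn
  rw [hstep]
  field_simp
  ring

/- `Re (r - a / r) = (1 - a / |r|²) Re r`, and the gap `(a / |r|²) |Re r|` absorbs the error
`C / |r|²` as soon as `|Re r| ≥ C / a`. -/
theorem re_isBigO_one_of_sub_div {a : ℝ} (ha : 0 < a) (hr : Tendsto r atTop (Bornology.cobounded ℂ))
    (h : (fun n => r (n + 1) - (r n - a / r n)) =O[atTop] fun n => (r n ^ 2)⁻¹) :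
    (fun n => (r n).re) =O[atTop] fun _ => (1 : ℝ) := by
  obtain ⟨C, hC⟩ := h.bound
  have hlarge : ∀ᶠ n in atTop, a ≤ ‖r n‖ ^ 2 :=
    ((tendsto_pow_atTop two_ne_zero).comp
      (tendsto_norm_atTop_iff_cobounded.2 hr)).eventually_ge_atTop a
  obtain ⟨N, hN⟩ := eventually_atTop.1 (hC.and hlarge)
  set M := max |(r N).re| (C / a)
  have hM : ∀ n ≥ N, |(r n).re| ≤ M := by
    intro n hn
    induction n, hn using Nat.le_induction with
    | base => exact le_max_left _ _
    | succ n hn ih =>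
      obtain ⟨herr, hbig⟩ := hN n hn
      rw [norm_inv, norm_pow] at herr
      set R := ‖r n‖ ^ 2
      have hR₀ : 0 < R := ha.trans_le hbig
      have hre : (r n - a / r n).re = (1 - a / R) * (r n).re := by
        rw [div_eq_mul_inv, Complex.sub_re, Complex.re_ofReal_mul, Complex.inv_re,
          Complex.normSq_eq_norm_sq]
        ring
      have hcontr : 0 ≤ 1 - a / R := sub_nonneg.2 ((div_le_one hR₀).2 hbig)
      have hCM : C ≤ a * M := (div_le_iff₀' ha).1 (le_max_right _ _)
      calc |(r (n + 1)).re|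
          = |(1 - a / R) * (r n).re + (r (n + 1) - (r n - a / r n)).re| := by
            rw [← hre, ← Complex.add_re, add_sub_cancel]
        _ ≤ (1 - a / R) * |(r n).re| + ‖r (n + 1) - (r n - a / r n)‖ := by
            refine (abs_add_le _ _).trans (add_le_add ?_ (Complex.abs_re_le_norm _))
            rw [abs_mul, abs_of_nonneg hcontr]
        _ ≤ (1 - a / R) * M + a * M * R⁻¹ := by
            gcongr
            exact herr.trans (by gcongr)
        _ = M := by ring
  exact IsBigO.of_bound M ((eventually_ge_atTop N).mono fun n hn => by simpa using hM n hn)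

theorem one_sub_add_sq_mul_exp_sub_isLittleO {ι : Type*} {l : Filter ι} {k φ ψ : ι → ℂ} (ω : ℂ)
    (hk : Tendsto k l (𝓝 0)) (hφ : Tendsto φ l (𝓝 0)) (hψ : Tendsto ψ l (𝓝 0)) :
    (fun n => (1 - k n + (ω + φ n) * k n ^ 2) * Complex.exp (k n + ψ n * k n ^ 2) -
      (1 + (ω - 1 / 2) * k n ^ 2)) =o[l] fun n => k n ^ 2 := by
  have hz : Tendsto (fun n => k n + ψ n * k n ^ 2) l (𝓝 0) := by
    simpa using hk.add (hψ.mul (hk.pow 2))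
  obtain ⟨χ, hχ, hexp⟩ := isLittleO_iff_exists_eq_mul.1
    ((Complex.exp_sub_sum_range_succ_isLittleO_pow 2).comp_tendsto hz)
  refine isLittleO_iff_exists_eq_mul.2 ⟨fun n => φ n + (ω + φ n) * k n +
    (1 - k n + (ω + φ n) * k n ^ 2) * (ψ n + (1 / 2 + χ n) * (1 + ψ n * k n) ^ 2) - 1 / 2, ?_, ?_⟩
  · have hlim : Tendsto (fun n => (k n, φ n, ψ n, χ n)) l (𝓝 (0, 0, 0, 0)) :=
      hk.prodMk_nhds (hφ.prodMk_nhds (hψ.prodMk_nhds hχ))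
    have hcont : Continuous fun z : ℂ × ℂ × ℂ × ℂ => z.2.1 + (ω + z.2.1) * z.1 +
      (1 - z.1 + (ω + z.2.1) * z.1 ^ 2) * (z.2.2.1 + (1 / 2 + z.2.2.2) * (1 + z.2.2.1 * z.1) ^ 2)
        - 1 / 2 := by fun_prop
    simpa [Function.comp_def] using (hcont.tendsto _).comp hlim
  · filter_upwards [hexp] with n hn
    simp only [Function.comp_apply, Pi.mul_apply, Finset.sum_range_succ, Finset.sum_range_zero,
      Nat.factorial] at hn ⊢
    push_cast at hn
    linear_combination (1 - k n + (ω + φ n) * k n ^ 2) * hn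

theorem exists_mul_exp_neg_div_succ_eq {t : ℕ → ℂ} {a ω : ℂ} (ha : a ≠ 0)
    (hr : Tendsto r atTop (Bornology.cobounded ℂ))
    (hrec : (fun n => r (n + 1) - (r n - a / r n)) =o[atTop] fun n => (r n ^ 2)⁻¹)
    (htrec : (fun n => t (n + 1) - t n * (1 - (r n)⁻¹ + ω * (r n ^ 2)⁻¹)) =o[atTop]
      fun n => t n * (r n ^ 2)⁻¹) :
    ∃ χ : ℕ → ℂ, Tendsto χ atTop (𝓝 0) ∧ ∀ᶠ n in atTop,
      t (n + 1) * Complex.exp (-r (n + 1) / a) =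
        t n * Complex.exp (-r n / a) * (1 + (ω - 1 / 2 + χ n) * (r n)⁻¹ ^ 2) := by
  have hinv : Tendsto (fun n => (r n)⁻¹) atTop (𝓝 0) := tendsto_inv₀_cobounded.comp hr
  obtain ⟨ψ, hψ, hrψ⟩ := isLittleO_iff_exists_eq_mul.1 hrec
  obtain ⟨φ, hφ, htφ⟩ := isLittleO_iff_exists_eq_mul.1 htrec
  obtain ⟨χ, hχ, hmulχ⟩ := isLittleO_iff_exists_eq_mul.1
    (one_sub_add_sq_mul_exp_sub_isLittleO ω hinv hφ (by simpa using (hψ.div_const a).neg))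
  refine ⟨χ, hχ, ?_⟩
  filter_upwards [hrψ, htφ, hmulχ] with n hrn htn hmul
  simp only [Pi.mul_apply, ← inv_pow] at hrn htn hmul
  have hexp : -r (n + 1) / a = -r n / a + ((r n)⁻¹ + -(ψ n / a) * (r n)⁻¹ ^ 2) := by
    rw [sub_eq_iff_eq_add.1 hrn]
    field_simp
    ring
  rw [hexp, Complex.exp_add, sub_eq_iff_eq_add.1 htn]
  linear_combination t n * Complex.exp (-r n / a) * hmul

/- `t exp (-r / a)` has eventually nondecreasing modulus because
`Re ((ω - 1 / 2) / r²) ~ (1 / 2 - ω) / (2 a n)`, while `Re r` stays bounded. -/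
theorem not_tendsto_zero_of_normal_form {t : ℕ → ℂ} {a ω : ℝ} (ha : 0 < a) (hω : ω < 1 / 2)
    (hr : Tendsto r atTop (Bornology.cobounded ℂ)) (ht₀ : ∀ᶠ n in atTop, t n ≠ 0)
    (hrec : (fun n => r (n + 1) - (r n - a / r n)) =o[atTop] fun n => (r n ^ 2)⁻¹)
    (htrec : (fun n => t (n + 1) - t n * (1 - (r n)⁻¹ + ω * (r n ^ 2)⁻¹)) =o[atTop]
      fun n => t n * (r n ^ 2)⁻¹) :
    ¬ Tendsto t atTop (𝓝 0) := by
  intro ht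
  have haC : (a : ℂ) ≠ 0 := Complex.ofReal_ne_zero.2 ha.ne'
  obtain ⟨χ, hχ, hsucc⟩ := exists_mul_exp_neg_div_succ_eq haC hr hrec htrec
  have hrate : Tendsto (fun n : ℕ => n * ((ω - 1 / 2 + χ n) * (r n)⁻¹ ^ 2)) atTop
      (𝓝 (((1 / 2 - ω) / (2 * a) : ℝ) : ℂ)) := by
    have hinv : (fun n => (r n)⁻¹) =O[atTop] fun _ => (1 : ℂ) :=
      (tendsto_inv₀_cobounded.comp hr).isBigO_one ℂ
    have hsq := tendsto_sq_div_natCast (a := a) hr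
      (hrec.trans_isBigO (by simpa [sq] using (isBigO_refl (fun n => (r n)⁻¹) atTop).mul hinv))
    convert (hχ.const_add ((ω : ℂ) - 1 / 2)).mul (hsq.inv₀ (by simpa using haC)) using 2
    · field_simp
    · push_cast
      field_simp
      ring
  have hgrowth : ∀ᶠ n in atTop, ‖t n * Complex.exp (-r n / a)‖ ≤
      ‖t (n + 1) * Complex.exp (-r (n + 1) / a)‖ := by
    refine eventually_norm_le_norm_succ (P := fun n => t n * Complex.exp (-r n / a)) ?_ hrate hsucc
    rw [Complex.ofReal_re]
    exact div_pos (sub_pos.2 hω) (by positivity)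
  refine not_tendsto_zero_of_norm_le_norm_succ
    (ht₀.mono fun n hn => mul_ne_zero hn (Complex.exp_ne_zero _)) hgrowth ?_
  obtain ⟨M, hM⟩ := (re_isBigO_one_of_sub_div ha hr hrec.isBigO).bound
  refine ht.zero_mul_isBoundedUnder_le ⟨Real.exp (M / a), eventually_map.2 (hM.mono fun n hn => ?_)⟩
  rw [Function.comp_apply, Complex.norm_exp, Complex.div_ofReal_re, Complex.neg_re]
  gcongr
  rw [norm_one, mul_one] at hn
  exact (neg_le_abs _).trans hn

end NormalForm

section Genericity

theorem exists_isOpen_forall_ge_le_of_eventually_le {X γ : Type*} [TopologicalSpace X]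
    [BaireSpace X] [LinearOrder γ] {g : ℕ → X → γ} (hg : ∀ n, LowerSemicontinuous (g n))
    {Ω : Set X} (hΩ : IsOpen Ω) (hne : Ω.Nonempty) {C : γ}
    (hC : ∀ p ∈ Ω, ∀ᶠ n in atTop, g n p ≤ C) :
    ∃ V ⊆ Ω, IsOpen V ∧ V.Nonempty ∧ ∃ N, ∀ n ≥ N, ∀ p ∈ V, g n p ≤ C := by
  have hclosed : ∀ N, IsClosed ((⋂ n ≥ N, g n ⁻¹' Set.Iic C) ∪ Ωᶜ) := fun N =>
    (isClosed_biInter fun n _ => (hg n).isClosed_preimage C).union hΩ.isClosed_compl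
  have hcover : ⋃ N, (⋂ n ≥ N, g n ⁻¹' Set.Iic C) ∪ Ωᶜ = Set.univ := by
    refine Set.eq_univ_of_forall fun p => Set.mem_iUnion.2 ?_
    by_cases hp : p ∈ Ω
    · obtain ⟨N, hN⟩ := eventually_atTop.1 (hC p hp)
      exact ⟨N, Or.inl (Set.mem_iInter₂.2 hN)⟩
    · exact ⟨0, Or.inr hp⟩
  obtain ⟨q, hqΩ, hq⟩ :=
    (dense_iUnion_interior_of_closed hclosed hcover).inter_open_nonempty Ω hΩ hne
  obtain ⟨N, hqN⟩ := Set.mem_iUnion.1 hq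
  refine ⟨_, Set.inter_subset_left, hΩ.inter isOpen_interior, ⟨q, hqΩ, hqN⟩, N, fun n hn p hp => ?_⟩
  have hpN := (interior_subset hp.2).resolve_right fun h => h hp.1
  exact Set.mem_iInter₂.1 hpN n hn

theorem dense_setOf_ne_zero_of_analyticOnNhd {𝕜 E F : Type*} [NontriviallyNormedField 𝕜]
    [NormedAddCommGroup E] [NormedSpace 𝕜 E] [PreconnectedSpace E] [NormedAddCommGroup F]
    [NormedSpace 𝕜 F] {f : E → F} (hf : AnalyticOnNhd 𝕜 f Set.univ) (hne : ∃ q, f q ≠ 0) :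
    Dense {p | f p ≠ 0} := by
  obtain ⟨q, hq⟩ := hne
  refine dense_iff_inter_open.2 fun V hV ⟨z, hz⟩ => ?_
  by_contra hempty
  refine hq (hf.eqOn_zero_of_preconnected_of_eventuallyEq_zero isPreconnected_univ
    (Set.mem_univ z) ?_ (Set.mem_univ q))
  filter_upwards [hV.mem_nhds hz] with w hw
  by_contra hw₀
  exact hempty ⟨w, hw, hw₀⟩

theorem exists_mem_forall_ne_zero_of_analyticOnNhd {ι 𝕜 E F : Type*} [Countable ι]
    [NontriviallyNormedField 𝕜] [NormedAddCommGroup E] [NormedSpace 𝕜 E] [PreconnectedSpace E]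
    [BaireSpace E] [NormedAddCommGroup F] [NormedSpace 𝕜 F] {f : ι → E → F}
    (hf : ∀ i, AnalyticOnNhd 𝕜 (f i) Set.univ) (hne : ∀ i, ∃ q, f i q ≠ 0) {Ω : Set E}
    (hΩ : IsOpen Ω) (hΩne : Ω.Nonempty) : ∃ p ∈ Ω, ∀ i, f i p ≠ 0 := by
  have hdense : Dense (⋂ i, {p | f i p ≠ 0}) := dense_iInter_of_isOpen
    (fun i => isOpen_ne_fun (continuousOn_univ.1 (hf i).continuousOn) continuous_const)
    fun i => dense_setOf_ne_zero_of_analyticOnNhd (hf i) (hne i)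
  obtain ⟨p, hp, hpf⟩ := hdense.inter_open_nonempty Ω hΩ hΩne
  exact ⟨p, hp, Set.mem_iInter.1 hpf⟩

end Genericity

section Iterates

theorem fderiv_isBigO_of_norm_le {ι E F : Type*} [NormedAddCommGroup E] [NormedSpace ℂ E]
    [NormedAddCommGroup F] [NormedSpace ℂ F] {l : Filter ι} {f : ι → E → F} {b : ι → ℝ} {p : E}
    {V : Set E} (hV : V ∈ 𝓝 p) (hf : ∀ i, DifferentiableOn ℂ (f i) V)
    (hb : ∀ᶠ i in l, ∀ q ∈ V, ‖f i q‖ ≤ b i) : (fun i => fderiv ℂ (f i) p) =O[l] b := by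
  obtain ⟨R, hR, hball⟩ := Metric.mem_nhds_iff.1 hV
  refine IsBigO.of_bound (2 / R) (hb.mono fun i hi => ?_)
  have hmaps : Set.MapsTo (f i) (Metric.ball p R) (Metric.closedBall (f i p) (2 * b i)) := by
    intro q hq
    rw [mem_closedBall_iff_norm, two_mul]
    exact (norm_sub_le _ _).trans (add_le_add (hi q (hball hq)) (hi p (mem_of_mem_nhds hV)))
  calc ‖fderiv ℂ (f i) p‖ ≤ 2 * b i / R :=
        Complex.norm_fderiv_le_div_of_mapsTo_ball ((hf i).mono hball) hmaps hR
    _ = 2 / R * b i := by ring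
    _ ≤ 2 / R * ‖b i‖ := by gcongr; exact Real.le_norm_self _

theorem natCast_rpow_isLittleO_rpow {p q : ℝ} (hpq : p < q) :
    (fun n : ℕ => (n : ℝ) ^ p) =o[atTop] fun n : ℕ => (n : ℝ) ^ q := by
  have hpos : ∀ᶠ n : ℕ in atTop, (0 : ℝ) < n := tendsto_natCast_atTop_atTop.eventually_gt_atTop 0
  refine (isLittleO_iff_tendsto' (hpos.mono fun n hn h => absurd h (by positivity))).2 ?_
  refine ((tendsto_rpow_neg_atTop (sub_pos.2 hpq)).comp tendsto_natCast_atTop_atTop).congr' ?_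
  filter_upwards [hpos] with n hn
  rw [Function.comp_apply, neg_sub, Real.rpow_sub hn]

theorem det_prod_eq {R : Type*} [CommRing R] (L : R × R →ₗ[R] R × R) :
    L.det = (L (1, 0)).1 * (L (0, 1)).2 - (L (0, 1)).1 * (L (1, 0)).2 := by
  rw [← LinearMap.det_toMatrix (Module.Basis.finTwoProd R), Matrix.det_fin_two]
  simp [LinearMap.toMatrix_apply]

theorem norm_det_prod_le {𝕜 : Type*} [NontriviallyNormedField 𝕜]
    (L : 𝕜 × 𝕜 →L[𝕜] 𝕜 × 𝕜) : ‖L.det‖ ≤ 2 * ‖L‖ ^ 2 := by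
  have h₁ : ‖L (1, 0)‖ ≤ ‖L‖ := L.unit_le_opNorm _ (by simp [Prod.norm_def])
  have h₂ : ‖L (0, 1)‖ ≤ ‖L‖ := L.unit_le_opNorm _ (by simp [Prod.norm_def])
  calc ‖L.det‖ = ‖(L (1, 0)).1 * (L (0, 1)).2 - (L (0, 1)).1 * (L (1, 0)).2‖ :=
        congr_arg norm (det_prod_eq _)
    _ ≤ ‖(L (1, 0)).1‖ * ‖(L (0, 1)).2‖ + ‖(L (0, 1)).1‖ * ‖(L (1, 0)).2‖ := by
        rw [← norm_mul, ← norm_mul]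
        exact norm_sub_le _ _
    _ ≤ ‖L‖ * ‖L‖ + ‖L‖ * ‖L‖ := by
        gcongr
        exacts [(norm_fst_le _).trans h₁, (norm_snd_le _).trans h₂, (norm_fst_le _).trans h₂,
          (norm_snd_le _).trans h₁]
    _ = 2 * ‖L‖ ^ 2 := by ring

theorem det_isBigO_sq {ι 𝕜 : Type*} [NontriviallyNormedField 𝕜] {l : Filter ι}
    {L : ι → 𝕜 × 𝕜 →L[𝕜] 𝕜 × 𝕜} {b : ι → ℝ} (hL : L =O[l] b) :
    (fun i => (L i).det) =O[l] fun i => b i ^ 2 :=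
  (IsBigO.of_bound 2 (Eventually.of_forall fun i => by
    simpa using norm_det_prod_le (L i))).trans (hL.norm_left.pow 2)

theorem det_fderiv_iterate_succ {𝕜 E : Type*} [NontriviallyNormedField 𝕜] [NormedAddCommGroup E]
    [NormedSpace 𝕜 E] {f : E → E} (hf : Differentiable 𝕜 f) (n : ℕ) (p : E) :
    (fderiv 𝕜 f^[n + 1] p).det = (fderiv 𝕜 f (f^[n] p)).det * (fderiv 𝕜 f^[n] p).det := by
  rw [Function.iterate_succ', fderiv_comp p (hf _) (hf.iterate n p)]
  exact LinearMap.det_comp _ _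

theorem analyticOnNhd_iterate {𝕜 E : Type*} [NontriviallyNormedField 𝕜] [NormedAddCommGroup E]
    [NormedSpace 𝕜 E] {f : E → E} {s : Set E} (hf : AnalyticOnNhd 𝕜 f s) (hs : Set.MapsTo f s s)
    (n : ℕ) : AnalyticOnNhd 𝕜 f^[n] s :=
  Nat.recOn n analyticOnNhd_id fun _ ih => ih.comp hf hs

end Iterates

/-- The map `(x, y) ↦ (x - y² + α x³, y - x y)`, with a complex parameter `α`. -/
def cubicMap (α : ℂ) (q : ℂ × ℂ) : ℂ × ℂ := (q.1 - q.2 ^ 2 + α * q.1 ^ 3, q.2 - q.1 * q.2)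

/-- `(x n, y n)` is an orbit of `cubicMap α` tending to the origin along the direction `[1 : u]`.
Orbits tending to the origin along `[0 : 1]` are not covered. -/
structure IsOrbitAlong (α u : ℂ) (x y : ℕ → ℂ) : Prop where
  fst_succ : ∀ n, x (n + 1) = x n - y n ^ 2 + α * x n ^ 3
  snd_succ : ∀ n, y (n + 1) = y n - x n * y n
  fst_ne_zero : ∀ᶠ n in atTop, x n ≠ 0
  tendsto_fst : Tendsto x atTop (𝓝 0)
  tendsto_slope : Tendsto (fun n => y n / x n) atTop (𝓝 u)

namespace IsOrbitAlong

variable {α u : ℂ} {x y : ℕ → ℂ}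

theorem tendsto_fst_sub_div_sq (h : IsOrbitAlong α u x y) :
    Tendsto (fun n => (x (n + 1) - x n) / x n ^ 2) atTop (𝓝 (-u ^ 2)) := by
  have hlim := (h.tendsto_slope.pow 2).neg.add (h.tendsto_fst.const_mul α)
  rw [mul_zero, add_zero] at hlim
  refine hlim.congr' ?_
  filter_upwards [h.fst_ne_zero] with n hn
  rw [h.fst_succ]
  field_simp
  ring

theorem tendsto_snd_sub_div_sq (h : IsOrbitAlong α u x y) :
    Tendsto (fun n => (y (n + 1) - y n) / x n ^ 2) atTop (𝓝 (-u)) := by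
  refine h.tendsto_slope.neg.congr' ?_
  filter_upwards [h.fst_ne_zero] with n hn
  rw [h.snd_succ]
  field_simp
  ring

theorem eq_zero_or_sq_eq_one (h : IsOrbitAlong α u x y) : u = 0 ∨ u ^ 2 = 1 := by
  have hchar : -u = u * -u ^ 2 :=
    eq_mul_of_tendsto_sub_div_sq h.fst_ne_zero h.tendsto_fst h.tendsto_slope
      h.tendsto_fst_sub_div_sq h.tendsto_snd_sub_div_sq
  have hfactor : u * (u ^ 2 - 1) = 0 := by linear_combination hchar
  exact (mul_eq_zero.1 hfactor).imp_right sub_eq_zero.1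

theorem tendsto_natCast_mul_fst (h : IsOrbitAlong α u x y) (hu : u ^ 2 = 1) :
    Tendsto (fun n : ℕ => n * x n) atTop (𝓝 1) := by
  have hlim := tendsto_natCast_mul_of_tendsto_sub_div_sq h.fst_ne_zero h.tendsto_fst
    h.tendsto_fst_sub_div_sq (by simp [hu])
  simpa [hu] using hlim

theorem tendsto_snd (h : IsOrbitAlong α u x y) : Tendsto y atTop (𝓝 0) := by
  have hlim := h.tendsto_slope.mul h.tendsto_fst
  rw [mul_zero] at hlim
  refine hlim.congr' ?_
  filter_upwards [h.fst_ne_zero] with n hn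
  rw [div_mul_cancel₀ _ hn]

theorem tendsto_natCast_mul_snd (h : IsOrbitAlong α u x y) (hu : u ^ 2 = 1) :
    Tendsto (fun n : ℕ => n * y n) atTop (𝓝 u) := by
  have hlim := (h.tendsto_natCast_mul_fst hu).mul h.tendsto_slope
  rw [one_mul] at hlim
  refine hlim.congr' ?_
  filter_upwards [h.fst_ne_zero] with n hn
  field_simp

end IsOrbitAlong

theorem not_tendsto_fst_div_snd_zero {α : ℂ} {x y : ℕ → ℂ}
    (hx_succ : ∀ n, x (n + 1) = x n - y n ^ 2 + α * x n ^ 3)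
    (hy_succ : ∀ n, y (n + 1) = y n - x n * y n) (hy : ∀ᶠ n in atTop, y n ≠ 0)
    (hy₀ : Tendsto y atTop (𝓝 0)) : ¬ Tendsto (fun n => x n / y n) atTop (𝓝 0) := by
  intro hslope
  have hA : Tendsto (fun n => (y (n + 1) - y n) / y n ^ 2) atTop (𝓝 0) := by
    have hlim := hslope.neg
    rw [neg_zero] at hlim
    refine hlim.congr' ?_
    filter_upwards [hy] with n hn
    rw [hy_succ]
    field_simp
    ring
  have hB : Tendsto (fun n => (x (n + 1) - x n) / y n ^ 2) atTop (𝓝 (-1)) := by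
    have hlim := (((hslope.pow 3).mul hy₀).const_mul α).const_add (-1)
    rw [mul_zero, mul_zero, add_zero] at hlim
    refine hlim.congr' ?_
    filter_upwards [hy] with n hn
    rw [hx_succ]
    field_simp
    ring
  simpa using eq_mul_of_tendsto_sub_div_sq hy hy₀ hslope hA hB

section DegenerateDirection

variable {α : ℂ} {x y : ℕ → ℂ}

/-- The square root of `1 - (y / x) ^ 2` tending to `1` along an orbit with slope tending to `0`, so
that `x * slopeRoot x y` is a branch of `√(x² - y²)`. -/
noncomputable def slopeRoot (x y : ℕ → ℂ) (n : ℕ) : ℂ := Complex.sqrt (1 - (y n / x n) ^ 2)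

/-- The factor by which the branch `x * slopeRoot x y` of `√(x² - y²)` is multiplied at step `n`. -/
noncomputable def rootRatio (x y : ℕ → ℂ) (n : ℕ) : ℂ :=
  x (n + 1) * slopeRoot x y (n + 1) / (x n * slopeRoot x y n)

theorem slopeRoot_sq (x y : ℕ → ℂ) (n : ℕ) : slopeRoot x y n ^ 2 = 1 - (y n / x n) ^ 2 := by
  rw [slopeRoot, Complex.sqrt]
  exact_mod_cast Complex.cpow_nat_inv_pow _ two_ne_zero

theorem mul_slopeRoot_sq {n : ℕ} (hn : x n ≠ 0) :
    (x n * slopeRoot x y n) ^ 2 = x n ^ 2 - y n ^ 2 := by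
  rw [mul_pow, slopeRoot_sq]
  field_simp

/-- The first normal form coordinate: it differs from `1 / (x σ)`, `σ` being `slopeRoot x y`, by a
quantity tending to `0` that brings its recursion to the form `r' = r - α / r + o(1 / r²)`. -/
noncomputable def radialCoord (α : ℂ) (x y : ℕ → ℂ) (n : ℕ) : ℂ :=
  (x n * slopeRoot x y n)⁻¹ + α / 3 * (1 - (slopeRoot x y n)⁻¹ ^ 3) -
    (1 / 2 - α) * (1 - (slopeRoot x y n)⁻¹)

/-- The second normal form coordinate: the half-angle substitution
`t = (1 - σ) / (y / x) = (y / x) / (1 + σ)`, where `σ` is `slopeRoot x y`. -/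
noncomputable def angularCoord (x y : ℕ → ℂ) (n : ℕ) : ℂ := y n / x n / (1 + slopeRoot x y n)

namespace IsOrbitAlong

theorem tendsto_slopeRoot (h : IsOrbitAlong α 0 x y) : Tendsto (slopeRoot x y) atTop (𝓝 1) := by
  have hcont : ContinuousAt Complex.sqrt 1 := continuousAt_cpow_const (Or.inl (by simp))
  have hlim := (h.tendsto_slope.pow 2).const_sub 1
  rw [zero_pow two_ne_zero, sub_zero] at hlim
  exact Complex.sqrt_one ▸ hcont.tendsto.comp hlim

theorem eventually_one_add_slopeRoot_ne_zero (h : IsOrbitAlong α 0 x y) :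
    ∀ᶠ n in atTop, 1 + slopeRoot x y n ≠ 0 :=
  (h.tendsto_slopeRoot.const_add 1).eventually_ne (show (1 : ℂ) + 1 ≠ 0 by norm_num)

theorem tendsto_prodMk_slopeRoot (h : IsOrbitAlong α 0 x y) :
    Tendsto (fun n => (x n, y n / x n, slopeRoot x y n)) atTop (𝓝 (0, 0, 1)) :=
  h.tendsto_fst.prodMk_nhds (h.tendsto_slope.prodMk_nhds h.tendsto_slopeRoot)

theorem tendsto_rootRatio (h : IsOrbitAlong α 0 x y) : Tendsto (rootRatio x y) atTop (𝓝 1) := by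
  have hx := tendsto_succ_div_of_tendsto_sub_div_sq h.fst_ne_zero h.tendsto_fst
    h.tendsto_fst_sub_div_sq
  have hσ := ((tendsto_add_atTop_iff_nat 1).2 h.tendsto_slopeRoot).div h.tendsto_slopeRoot
    one_ne_zero
  have hlim := hx.mul hσ
  rw [div_one, mul_one] at hlim
  exact hlim.congr fun n => div_mul_div_comm _ _ _ _

theorem eventually_rootRatio_sq (h : IsOrbitAlong α 0 x y) : ∀ᶠ n in atTop,
    rootRatio x y n ^ 2 = 1 + x n ^ 2 * (-(y n / x n) ^ 2 +
      (2 * α - 2 * α * (y n / x n) ^ 2 * x n + α ^ 2 * x n ^ 2) / slopeRoot x y n ^ 2) := by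
  filter_upwards [h.fst_ne_zero, (tendsto_add_atTop_nat 1).eventually h.fst_ne_zero,
    h.tendsto_slopeRoot.eventually_ne one_ne_zero] with n hx hx' hσ
  have hsq := mul_slopeRoot_sq (y := y) hx
  have hx₂ : x n ^ 2 - y n ^ 2 ≠ 0 := by
    rw [← hsq]
    exact pow_ne_zero 2 (mul_ne_zero hx hσ)
  have hσ₂ : slopeRoot x y n ^ 2 = (x n ^ 2 - y n ^ 2) / x n ^ 2 := by
    rw [← hsq]
    field_simp
  rw [rootRatio, div_pow, hsq, mul_slopeRoot_sq hx', hσ₂, h.fst_succ, h.snd_succ]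
  field_simp
  ring

theorem tendsto_rootRatio_sub_one_div_sq (h : IsOrbitAlong α 0 x y) :
    Tendsto (fun n => (rootRatio x y n - 1) / x n ^ 2) atTop (𝓝 α) := by
  have hcont : ContinuousAt (fun z : (ℂ × ℂ × ℂ) × ℂ => (-z.1.2.1 ^ 2 +
      (2 * α - 2 * α * z.1.2.1 ^ 2 * z.1.1 + α ^ 2 * z.1.1 ^ 2) / z.1.2.2 ^ 2) / (1 + z.2))
      ((0, 0, 1), 1) := by fun_prop (disch := norm_num)
  have hlim := hcont.tendsto.comp (h.tendsto_prodMk_slopeRoot.prodMk_nhds h.tendsto_rootRatio)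
  have hvalue : (-0 ^ 2 + (2 * α - 2 * α * 0 ^ 2 * 0 + α ^ 2 * 0 ^ 2) / 1 ^ 2) / (1 + 1) = α := by
    ring
  rw [hvalue] at hlim
  refine hlim.congr' ?_
  filter_upwards [h.fst_ne_zero, h.eventually_rootRatio_sq,
    (h.tendsto_rootRatio.const_add 1).eventually_ne (show (1 : ℂ) + 1 ≠ 0 by norm_num)]
    with n hx hsq hρ
  rw [Function.comp_apply, div_eq_div_iff hρ (pow_ne_zero 2 hx)]
  linear_combination -hsq

theorem inv_rootRatio_sub_isLittleO (h : IsOrbitAlong α 0 x y) :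
    (fun n => (rootRatio x y n)⁻¹ -
      (1 - x n ^ 2 * (α / slopeRoot x y n ^ 2 - (y n / x n) ^ 2 / 2))) =o[atTop]
      fun n => x n ^ 3 := by
  have hsqrt := inv_sub_one_sub_half_isBigO h.tendsto_rootRatio h.eventually_rootRatio_sq
  have hcont : ContinuousAt (fun z : ℂ × ℂ × ℂ => z.1 * (-z.2.1 ^ 2 +
      (2 * α - 2 * α * z.2.1 ^ 2 * z.1 + α ^ 2 * z.1 ^ 2) / z.2.2 ^ 2) ^ 2) (0, 0, 1) := by
    fun_prop (disch := norm_num)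
  have hquartic := isLittleO_of_continuousAt_of_eq_mul (g := fun n => x n ^ 3) _
    h.tendsto_prodMk_slopeRoot hcont (zero_mul _) (.of_forall fun n => rfl)
  have hcubic : (fun n => x n ^ 3 * (α * (y n / x n) ^ 2 - α ^ 2 * x n / 2) / slopeRoot x y n ^ 2)
      =o[atTop] fun n => x n ^ 3 :=
    isLittleO_of_continuousAt_of_eq_mul
      (fun z : ℂ × ℂ × ℂ => (α * z.2.1 ^ 2 - α ^ 2 * z.1 / 2) / z.2.2 ^ 2)
      h.tendsto_prodMk_slopeRoot (by fun_prop (disch := norm_num)) (by simp)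
      (.of_forall fun n => by ring)
  refine ((hsqrt.trans_isLittleO (hquartic.congr_left fun n => by ring)).add hcubic).congr_left
    fun n => ?_
  ring

theorem inv_slopeRoot_succ_sub_isLittleO (h : IsOrbitAlong α 0 x y) :
    (fun n => (slopeRoot x y (n + 1))⁻¹ - (slopeRoot x y n)⁻¹ * (1 - (y n / x n) ^ 2 * x n))
      =o[atTop] fun n => x n ^ 2 := by
  obtain ⟨ψ, hψ, hρψ⟩ := isLittleO_iff_exists_eq_mul.1 h.inv_rootRatio_sub_isLittleO
  refine isLittleO_of_continuousAt_of_eq_mul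
    (fun z : (ℂ × ℂ × ℂ) × ℂ => z.1.2.2⁻¹ * (α + (1 - z.1.2.1 ^ 2 * z.1.1 + α * z.1.1 ^ 2) *
      (z.1.2.1 ^ 2 / 2 - α / z.1.2.2 ^ 2 + z.2 * z.1.1)))
    (h.tendsto_prodMk_slopeRoot.prodMk_nhds hψ) (by fun_prop (disch := norm_num)) (by simp) ?_
  filter_upwards [hρψ, h.fst_ne_zero, (tendsto_add_atTop_nat 1).eventually h.fst_ne_zero,
    h.tendsto_slopeRoot.eventually_ne one_ne_zero,
    (tendsto_add_atTop_nat 1).eventually (h.tendsto_slopeRoot.eventually_ne one_ne_zero)]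
    with n hρ hx hx' hσ hσ'
  have hm : x (n + 1) = x n * (1 - (y n / x n) ^ 2 * x n + α * x n ^ 2) := by
    rw [h.fst_succ]
    field_simp
  have hinv : (slopeRoot x y (n + 1))⁻¹ = (slopeRoot x y n)⁻¹ *
      (1 - (y n / x n) ^ 2 * x n + α * x n ^ 2) * (rootRatio x y n)⁻¹ := by
    rw [eq_div_of_mul_eq hx ((mul_comm _ _).trans hm.symm), rootRatio]
    field_simp
  rw [Pi.mul_apply, sub_eq_iff_eq_add] at hρ
  rw [hinv, hρ]
  ring

theorem inv_slopeRoot_succ_pow_three_sub_isLittleO (h : IsOrbitAlong α 0 x y) :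
    (fun n => (slopeRoot x y (n + 1))⁻¹ ^ 3 -
      (slopeRoot x y n)⁻¹ ^ 3 * (1 - 3 * (y n / x n) ^ 2 * x n)) =o[atTop] fun n => x n ^ 2 := by
  obtain ⟨τ, hτ, hστ⟩ := isLittleO_iff_exists_eq_mul.1 h.inv_slopeRoot_succ_sub_isLittleO
  refine isLittleO_of_continuousAt_of_eq_mul
    (fun z : (ℂ × ℂ × ℂ) × ℂ => z.1.2.2⁻¹ ^ 3 * z.1.2.1 ^ 4 * (3 - z.1.2.1 ^ 2 * z.1.1) +
      z.2 * (3 * (z.1.2.2⁻¹ * (1 - z.1.2.1 ^ 2 * z.1.1)) ^ 2 +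
        3 * (z.1.2.2⁻¹ * (1 - z.1.2.1 ^ 2 * z.1.1)) * z.2 * z.1.1 ^ 2 + z.2 ^ 2 * z.1.1 ^ 4))
    (h.tendsto_prodMk_slopeRoot.prodMk_nhds hτ) (by fun_prop (disch := norm_num)) (by simp) ?_
  filter_upwards [hστ] with n hn
  rw [Pi.mul_apply, sub_eq_iff_eq_add] at hn
  rw [hn]
  ring

theorem inv_mul_slopeRoot_succ_sub_isLittleO (h : IsOrbitAlong α 0 x y) :
    (fun n => (x (n + 1) * slopeRoot x y (n + 1))⁻¹ - (x n * slopeRoot x y n)⁻¹ +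
      x n * (slopeRoot x y n)⁻¹ * (α / slopeRoot x y n ^ 2 - (y n / x n) ^ 2 / 2)) =o[atTop]
      fun n => x n ^ 2 := by
  obtain ⟨ψ, hψ, hρψ⟩ := isLittleO_iff_exists_eq_mul.1 h.inv_rootRatio_sub_isLittleO
  refine isLittleO_of_continuousAt_of_eq_mul (fun z : (ℂ × ℂ × ℂ) × ℂ => z.1.2.2⁻¹ * z.2)
    (h.tendsto_prodMk_slopeRoot.prodMk_nhds hψ) (by fun_prop (disch := norm_num)) (by simp) ?_
  filter_upwards [hρψ, h.fst_ne_zero, h.tendsto_slopeRoot.eventually_ne one_ne_zero] with n hρ hx hσ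
  have hinv : (x (n + 1) * slopeRoot x y (n + 1))⁻¹ =
      (x n * slopeRoot x y n)⁻¹ * (rootRatio x y n)⁻¹ := by
    rw [← mul_inv, rootRatio, mul_div_cancel₀ _ (mul_ne_zero hx hσ)]
  rw [Pi.mul_apply, sub_eq_iff_eq_add] at hρ
  rw [hinv, hρ]
  field_simp
  ring

theorem radialCoord_succ_sub_isLittleO (h : IsOrbitAlong α 0 x y) :
    (fun n => radialCoord α x y (n + 1) - radialCoord α x y n + α * (x n * slopeRoot x y n))
      =o[atTop] fun n => x n ^ 2 := by
  refine ((h.inv_mul_slopeRoot_succ_sub_isLittleO.sub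
    (h.inv_slopeRoot_succ_pow_three_sub_isLittleO.const_mul_left (α / 3))).add
    (h.inv_slopeRoot_succ_sub_isLittleO.const_mul_left (1 / 2 - α))).congr' ?_ .rfl
  filter_upwards [h.tendsto_slopeRoot.eventually_ne one_ne_zero] with n hσ
  have hU : (y n / x n) ^ 2 = 1 - slopeRoot x y n ^ 2 := by
    rw [slopeRoot_sq, sub_sub_cancel]
  simp only [radialCoord, hU]
  field_simp
  ring

theorem tendsto_radialCoord_sub_inv (h : IsOrbitAlong α 0 x y) :
    Tendsto (fun n => radialCoord α x y n - (x n * slopeRoot x y n)⁻¹) atTop (𝓝 0) := by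
  have hinv := h.tendsto_slopeRoot.inv₀ one_ne_zero
  have hlim := (((hinv.pow 3).const_sub 1).const_mul (α / 3)).sub
    ((hinv.const_sub 1).const_mul (1 / 2 - α))
  simp only [inv_one, one_pow, sub_self, mul_zero] at hlim
  exact hlim.congr fun n => by rw [radialCoord]; ring

theorem inv_radialCoord_sub_isLittleO (h : IsOrbitAlong α 0 x y) :
    (fun n => (radialCoord α x y n)⁻¹ - x n * slopeRoot x y n) =o[atTop] fun n => x n ^ 2 := by
  have hbase := h.tendsto_prodMk_slopeRoot.prodMk_nhds h.tendsto_radialCoord_sub_inv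
  have hden : Tendsto (fun n => 1 + x n * slopeRoot x y n *
      (radialCoord α x y n - (x n * slopeRoot x y n)⁻¹)) atTop (𝓝 1) := by
    simpa using
      ((h.tendsto_fst.mul h.tendsto_slopeRoot).mul h.tendsto_radialCoord_sub_inv).const_add 1
  refine isLittleO_of_continuousAt_of_eq_mul
    (fun z : (ℂ × ℂ × ℂ) × ℂ => -(z.1.2.2 ^ 2 * z.2 / (1 + z.1.1 * z.1.2.2 * z.2))) hbase
    (by fun_prop (disch := norm_num)) (by simp) ?_
  filter_upwards [h.fst_ne_zero, h.tendsto_slopeRoot.eventually_ne one_ne_zero,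
    hden.eventually_ne one_ne_zero] with n hx hσ hn
  have hr : radialCoord α x y n = (1 + x n * slopeRoot x y n *
      (radialCoord α x y n - (x n * slopeRoot x y n)⁻¹)) / (x n * slopeRoot x y n) := by
    field_simp
    ring
  generalize radialCoord α x y n - (x n * slopeRoot x y n)⁻¹ = e at hr hn ⊢
  rw [hr]
  field_simp
  ring

theorem tendsto_fst_mul_radialCoord (h : IsOrbitAlong α 0 x y) :
    Tendsto (fun n => x n * radialCoord α x y n) atTop (𝓝 1) := by
  have hlim := (h.tendsto_fst.mul h.tendsto_radialCoord_sub_inv).add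
    (h.tendsto_slopeRoot.inv₀ one_ne_zero)
  rw [mul_zero, inv_one, zero_add] at hlim
  refine hlim.congr' ?_
  filter_upwards [h.fst_ne_zero] with n hx
  rw [mul_sub, mul_inv, mul_inv_cancel_left₀ hx, sub_add_cancel]

theorem fst_sq_isBigO_inv_radialCoord_sq (h : IsOrbitAlong α 0 x y) :
    (fun n => x n ^ 2) =O[atTop] fun n => (radialCoord α x y n ^ 2)⁻¹ := by
  refine isBigO_iff_exists_eq_mul.2
    ⟨_, (h.tendsto_fst_mul_radialCoord.pow 2).norm.isBoundedUnder_le, ?_⟩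
  filter_upwards [h.tendsto_fst_mul_radialCoord.eventually_ne one_ne_zero] with n hn
  rw [Pi.mul_apply, mul_pow, mul_inv_cancel_right₀ (pow_ne_zero 2 (right_ne_zero_of_mul hn))]

theorem tendsto_radialCoord (h : IsOrbitAlong α 0 x y) :
    Tendsto (radialCoord α x y) atTop (Bornology.cobounded ℂ) := by
  have hinv := h.tendsto_fst.mul (h.tendsto_fst_mul_radialCoord.inv₀ one_ne_zero)
  rw [zero_mul] at hinv
  have hne : ∀ᶠ n in atTop, x n * (x n * radialCoord α x y n)⁻¹ ≠ 0 := by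
    filter_upwards [h.fst_ne_zero, h.tendsto_fst_mul_radialCoord.eventually_ne one_ne_zero]
      with n hx hr using mul_ne_zero hx (inv_ne_zero hr)
  refine (tendsto_inv₀_nhdsNE_zero.comp (tendsto_nhdsWithin_iff.2 ⟨hinv, hne⟩)).congr' ?_
  filter_upwards [h.fst_ne_zero] with n hx
  rw [Function.comp_apply, mul_inv, inv_inv, inv_mul_cancel_left₀ hx]

theorem radialCoord_succ_sub_sub_div_isLittleO (h : IsOrbitAlong α 0 x y) :
    (fun n => radialCoord α x y (n + 1) - (radialCoord α x y n - α / radialCoord α x y n)) =o[atTop]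
      fun n => (radialCoord α x y n ^ 2)⁻¹ :=
  ((h.radialCoord_succ_sub_isLittleO.add
    (h.inv_radialCoord_sub_isLittleO.const_mul_left α)).congr_left fun n => by ring).trans_isBigO
    h.fst_sq_isBigO_inv_radialCoord_sq

theorem eventually_angularCoord_succ (h : IsOrbitAlong α 0 x y) : ∀ᶠ n in atTop,
    angularCoord x y (n + 1) = angularCoord x y n * ((1 - x n) * (1 + slopeRoot x y n) /
      (1 - (y n / x n) ^ 2 * x n + α * x n ^ 2 + slopeRoot x y n * rootRatio x y n)) := by
  filter_upwards [h.fst_ne_zero, (tendsto_add_atTop_nat 1).eventually h.fst_ne_zero,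
    h.tendsto_slopeRoot.eventually_ne one_ne_zero, h.eventually_one_add_slopeRoot_ne_zero,
    (tendsto_add_atTop_nat 1).eventually h.eventually_one_add_slopeRoot_ne_zero]
    with n hx hx' hσ₀ hσ₁ hσ₁'
  have hden : 1 - (y n / x n) ^ 2 * x n + α * x n ^ 2 + slopeRoot x y n * rootRatio x y n =
      x (n + 1) * (1 + slopeRoot x y (n + 1)) / x n := by
    rw [rootRatio, mul_add, mul_one, add_div]
    congr 1
    · rw [h.fst_succ]
      field_simp
    · field_simp
  rw [hden, angularCoord, angularCoord, h.snd_succ]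
  field_simp

theorem exists_tendsto_add_slopeRoot_mul_rootRatio_eq (h : IsOrbitAlong α 0 x y) :
    ∃ μ : ℕ → ℂ, Tendsto μ atTop (𝓝 α) ∧
      ∀ᶠ n in atTop,
        1 - (y n / x n) ^ 2 * x n + α * x n ^ 2 + slopeRoot x y n * rootRatio x y n =
          (1 + slopeRoot x y n) * (1 - (1 - slopeRoot x y n) * x n + μ n * x n ^ 2) := by
  refine ⟨fun n => (α + slopeRoot x y n * ((rootRatio x y n - 1) / x n ^ 2)) /
    (1 + slopeRoot x y n), ?_, ?_⟩
  · have hlim := ((h.tendsto_slopeRoot.mul h.tendsto_rootRatio_sub_one_div_sq).const_add α).div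
      (h.tendsto_slopeRoot.const_add 1) (by norm_num)
    rwa [show (α + 1 * α) / (1 + 1) = α by ring] at hlim
  · filter_upwards [h.fst_ne_zero, h.eventually_one_add_slopeRoot_ne_zero] with n hx hσ₁
    have hU : (y n / x n) ^ 2 = 1 - slopeRoot x y n ^ 2 := by
      rw [slopeRoot_sq, sub_sub_cancel]
    rw [hU]
    field_simp
    ring

theorem angularCoord_succ_sub_isLittleO (h : IsOrbitAlong α 0 x y) :
    (fun n => angularCoord x y (n + 1) -
      angularCoord x y n * (1 - x n * slopeRoot x y n - α * x n ^ 2)) =o[atTop]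
      fun n => angularCoord x y n * x n ^ 2 := by
  obtain ⟨μ, hμ, hfactor⟩ := h.exists_tendsto_add_slopeRoot_mul_rootRatio_eq
  have hbase := h.tendsto_prodMk_slopeRoot.prodMk_nhds hμ
  have hden : Tendsto (fun n => 1 - (1 - slopeRoot x y n) * x n + μ n * x n ^ 2) atTop (𝓝 1) := by
    have hcont : Continuous fun z : (ℂ × ℂ × ℂ) × ℂ =>
      1 - (1 - z.1.2.2) * z.1.1 + z.2 * z.1.1 ^ 2 := by fun_prop
    simpa [Function.comp_def] using (hcont.tendsto _).comp hbase
  refine isLittleO_of_continuousAt_of_eq_mul (fun z : (ℂ × ℂ × ℂ) × ℂ =>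
    (α - z.2 - z.1.2.2 * (1 - z.1.2.2) + z.1.1 * (z.2 * z.1.2.2 - α * (1 - z.1.2.2)) +
      α * z.2 * z.1.1 ^ 2) / (1 - (1 - z.1.2.2) * z.1.1 + z.2 * z.1.1 ^ 2))
    hbase (by fun_prop (disch := norm_num)) (by simp) ?_
  filter_upwards [h.eventually_angularCoord_succ, hfactor, hden.eventually_ne one_ne_zero,
    h.eventually_one_add_slopeRoot_ne_zero] with n hn hDn hD hσ₁
  rw [hn, hDn, mul_comm (1 - x n), mul_div_mul_left _ _ hσ₁, mul_div_assoc', div_sub' hD,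
    div_mul_eq_mul_div]
  congr 1
  ring

theorem angularCoord_succ_sub_mul_isLittleO (h : IsOrbitAlong α 0 x y) :
    (fun n => angularCoord x y (n + 1) - angularCoord x y n *
      (1 - (radialCoord α x y n)⁻¹ + -α * (radialCoord α x y n ^ 2)⁻¹)) =o[atTop]
      fun n => angularCoord x y n * (radialCoord α x y n ^ 2)⁻¹ := by
  have hlin : (fun n => (radialCoord α x y n)⁻¹ - x n * slopeRoot x y n +
      α * ((radialCoord α x y n)⁻¹ ^ 2 - x n ^ 2)) =o[atTop] fun n => x n ^ 2 := by
    refine h.inv_radialCoord_sub_isLittleO.add (.const_mul_left ?_ α)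
    refine isLittleO_of_continuousAt_of_eq_mul (fun z : ℂ => z⁻¹ ^ 2 - 1)
      h.tendsto_fst_mul_radialCoord (by fun_prop (disch := norm_num)) (by simp) ?_
    filter_upwards [h.fst_ne_zero] with n hx
    field_simp
  have hstep := h.angularCoord_succ_sub_isLittleO.add
    ((isBigO_refl (angularCoord x y) atTop).mul_isLittleO hlin)
  refine (hstep.congr_left fun n => ?_).trans_isBigO
    ((isBigO_refl (angularCoord x y) atTop).mul h.fst_sq_isBigO_inv_radialCoord_sq)
  ring

end IsOrbitAlong

theorem IsOrbitAlong.exists_snd_eq_zero {a : ℝ} (ha : 0 < a) (h : IsOrbitAlong a 0 x y) :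
    ∃ n, y n = 0 := by
  by_contra! hy
  have hlim : Tendsto (angularCoord x y) atTop (𝓝 0) := by
    have hdiv := h.tendsto_slope.div (h.tendsto_slopeRoot.const_add 1) (by norm_num)
    rwa [zero_div] at hdiv
  have hne : ∀ᶠ n in atTop, angularCoord x y n ≠ 0 := by
    filter_upwards [h.fst_ne_zero, h.eventually_one_add_slopeRoot_ne_zero]
      with n hx hσ using div_ne_zero (div_ne_zero (hy n) hx) hσ
  exact not_tendsto_zero_of_normal_form ha (show -a < 1 / 2 by linarith) h.tendsto_radialCoord hne
    h.radialCoord_succ_sub_sub_div_isLittleO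
    (by exact_mod_cast h.angularCoord_succ_sub_mul_isLittleO) hlim

end DegenerateDirection

section CubicMap

theorem cubicMap_zero (α : ℂ) : cubicMap α 0 = 0 := by simp [cubicMap]

theorem analyticOnNhd_cubicMap (α : ℂ) : AnalyticOnNhd ℂ (cubicMap α) Set.univ := by
  intro q _
  have hx : AnalyticAt ℂ Prod.fst q := analyticAt_fst
  have hy : AnalyticAt ℂ Prod.snd q := analyticAt_snd
  unfold cubicMap
  fun_prop

theorem hasFDerivAt_cubicMap (α : ℂ) (q : ℂ × ℂ) : HasFDerivAt (cubicMap α)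
    (((1 + α * (3 * q.1 ^ 2)) • ContinuousLinearMap.fst ℂ ℂ ℂ -
        (2 * q.2) • ContinuousLinearMap.snd ℂ ℂ ℂ).prod
      ((1 - q.1) • ContinuousLinearMap.snd ℂ ℂ ℂ - q.2 • ContinuousLinearMap.fst ℂ ℂ ℂ)) q := by
  have hx : HasFDerivAt Prod.fst (ContinuousLinearMap.fst ℂ ℂ ℂ) q := hasFDerivAt_fst
  have hy : HasFDerivAt Prod.snd (ContinuousLinearMap.snd ℂ ℂ ℂ) q := hasFDerivAt_snd
  refine (((hx.sub (hy.pow 2)).add ((hx.pow 3).const_mul α)).prodMk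
    (hy.sub (hx.mul hy))).congr_fderiv ?_
  ext <;> simp

theorem det_fderiv_cubicMap (α : ℂ) (q : ℂ × ℂ) :
    (fderiv ℂ (cubicMap α) q).det = (1 + 3 * α * q.1 ^ 2) * (1 - q.1) - 2 * q.2 ^ 2 := by
  rw [(hasFDerivAt_cubicMap α q).fderiv, ContinuousLinearMap.det, det_prod_eq]
  simp
  ring

theorem exists_mem_forall_iterate_snd_ne_zero (α : ℂ) {Ω : Set (ℂ × ℂ)} (hΩ : IsOpen Ω)
    (hne : Ω.Nonempty) : ∃ p ∈ Ω, ∀ n, ((cubicMap α)^[n] p).2 ≠ 0 := by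
  refine exists_mem_forall_ne_zero_of_analyticOnNhd (𝕜 := ℂ)
    (fun n => analyticOnNhd_snd.comp
      (analyticOnNhd_iterate (analyticOnNhd_cubicMap α) (Set.mapsTo_univ _ _) n)
      (Set.mapsTo_univ _ _))
    (fun n => ?_) hΩ hne
  by_contra! hzero
  have hid : HasFDerivAt (cubicMap α) (1 : ℂ × ℂ →L[ℂ] ℂ × ℂ) 0 :=
    (hasFDerivAt_cubicMap α 0).congr_fderiv (by ext <;> simp)
  have hsnd := (hid.iterate (cubicMap_zero α) n).snd
  have heq := hsnd.unique ((hasFDerivAt_const (0 : ℂ) (0 : ℂ × ℂ)).congr_of_eventuallyEq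
    (Eventually.of_forall hzero))
  simpa using DFunLike.congr_fun heq (0, 1)

theorem exists_mem_forall_det_fderiv_iterate_ne_zero (α : ℂ) {Ω : Set (ℂ × ℂ)} (hΩ : IsOpen Ω)
    (hne : Ω.Nonempty) : ∃ p ∈ Ω, ∀ n, (fderiv ℂ (cubicMap α)^[n] p).det ≠ 0 := by
  have hanalytic : ∀ n, AnalyticOnNhd ℂ
      (fun p => (fderiv ℂ (cubicMap α) ((cubicMap α)^[n] p)).det) Set.univ := by
    intro n p hp
    have hn := analyticOnNhd_iterate (analyticOnNhd_cubicMap α) (Set.mapsTo_univ _ _) n p hp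
    have hx : AnalyticAt ℂ (fun p => ((cubicMap α)^[n] p).1) p := analyticAt_fst.comp hn
    have hy : AnalyticAt ℂ (fun p => ((cubicMap α)^[n] p).2) p := analyticAt_snd.comp hn
    simp only [det_fderiv_cubicMap]
    fun_prop
  obtain ⟨p, hp, hpne⟩ := exists_mem_forall_ne_zero_of_analyticOnNhd hanalytic
    (fun n => ⟨0, by simp [det_fderiv_cubicMap, Function.iterate_fixed (cubicMap_zero α)]⟩) hΩ hne
  refine ⟨p, hp, fun n => ?_⟩
  induction n with
  | zero => simp [ContinuousLinearMap.det]
  | succ n ih =>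
    rw [det_fderiv_iterate_succ fun q => (hasFDerivAt_cubicMap α q).differentiableAt]
    exact mul_ne_zero (hpne n) ih

namespace IsOrbitAlong

variable {α u : ℂ} {x y : ℕ → ℂ}

theorem tendsto_natCast_mul_det_sub_one (h : IsOrbitAlong α u x y) (hu : u ^ 2 = 1) :
    Tendsto (fun n : ℕ => n * ((fderiv ℂ (cubicMap α) (x n, y n)).det - 1)) atTop (𝓝 (-1)) := by
  have hx := h.tendsto_natCast_mul_fst hu
  have hx₀ := h.tendsto_fst
  have hy₀ : Tendsto (fun n => y n) atTop (𝓝 0) := h.tendsto_snd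
  have hlim := (hx.mul (((hx₀.const_mul (3 * α)).sub_const 1).sub
    ((hx₀.pow 2).const_mul (3 * α)))).sub (((h.tendsto_natCast_mul_snd hu).mul hy₀).const_mul 2)
  simp only [mul_zero, zero_sub, ne_eq, OfNat.ofNat_ne_zero, not_false_eq_true, zero_pow, sub_zero,
    one_mul] at hlim
  refine hlim.congr fun n => ?_
  rw [det_fderiv_cubicMap]
  ring

theorem eventually_one_sub_div_le_norm_det (h : IsOrbitAlong α u x y) (hu : u ^ 2 = 1) {c : ℝ}
    (hc : 1 < c) : ∀ᶠ n : ℕ in atTop, 1 - c / n ≤ ‖(fderiv ℂ (cubicMap α) (x n, y n)).det‖ := by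
  have hlim := (h.tendsto_natCast_mul_det_sub_one hu).norm
  rw [norm_neg, norm_one] at hlim
  filter_upwards [hlim.eventually_le_const hc, eventually_gt_atTop 0] with n hn hpos
  have hpos' : (0 : ℝ) < n := Nat.cast_pos.2 hpos
  rw [norm_mul, Complex.norm_natCast, ← le_div_iff₀' hpos'] at hn
  have htri := norm_sub_norm_le 1 (fderiv ℂ (cubicMap α) (x n, y n)).det
  rw [norm_one, norm_sub_rev] at htri
  linarith

theorem eventually_natCast_mul_norm_le (h : IsOrbitAlong α u x y) (hu : u ^ 2 = 1) {C : ℝ}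
    (hC : 1 < C) : ∀ᶠ n : ℕ in atTop, n * ‖(x n, y n)‖ ≤ C := by
  have hu₁ : ‖u‖ = 1 := Complex.norm_eq_one_of_pow_eq_one hu two_ne_zero
  have hx := (h.tendsto_natCast_mul_fst hu).norm
  have hy := (h.tendsto_natCast_mul_snd hu).norm
  rw [norm_one] at hx
  rw [hu₁] at hy
  filter_upwards [hx.eventually_le_const hC, hy.eventually_le_const hC] with n hxn hyn
  rw [norm_mul, Complex.norm_natCast] at hxn hyn
  rw [Prod.norm_def, mul_max_of_nonneg _ _ n.cast_nonneg]
  exact max_le hxn hyn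

end IsOrbitAlong

theorem natCast_rpow_neg_isBigO_det_fderiv_iterate {α u : ℂ} {p : ℂ × ℂ} (hu : u ^ 2 = 1)
    (h : IsOrbitAlong α u (fun n => ((cubicMap α)^[n] p).1) fun n => ((cubicMap α)^[n] p).2)
    (hdet : ∀ n, (fderiv ℂ (cubicMap α)^[n] p).det ≠ 0) {s : ℝ} (hs : 1 < s) :
    (fun n : ℕ => (n : ℝ) ^ (-s)) =O[atTop] fun n => (fderiv ℂ (cubicMap α)^[n] p).det := by
  obtain ⟨c, hc, hcs⟩ := exists_between hs
  refine (rpow_neg_isBigO_of_mul_one_sub_le hs.le hcs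
    (Eventually.of_forall fun n => norm_pos_iff.2 (hdet n)) ?_).of_norm_right
  filter_upwards [h.eventually_one_sub_div_le_norm_det hu hc] with n hn
  rw [det_fderiv_iterate_succ fun q => (hasFDerivAt_cubicMap α q).differentiableAt, norm_mul,
    mul_comm]
  gcongr

theorem not_forall_isOrbitAlong_of_sq_eq_one {α u : ℂ} (hu : u ^ 2 = 1) {Ω : Set (ℂ × ℂ)}
    (hΩ : IsOpen Ω) (hne : Ω.Nonempty) : ¬ ∀ p ∈ Ω,
      IsOrbitAlong α u (fun n => ((cubicMap α)^[n] p).1) fun n => ((cubicMap α)^[n] p).2 := by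
  intro h
  have hdiff : Differentiable ℂ (cubicMap α) := fun q =>
    (hasFDerivAt_cubicMap α q).differentiableAt
  obtain ⟨V, hVΩ, hV, hVne, N, hN⟩ := exists_isOpen_forall_ge_le_of_eventually_le
    (g := fun n p => n * ‖(cubicMap α)^[n] p‖)
    (fun n => ((hdiff.iterate n).continuous.norm.const_mul _).lowerSemicontinuous) hΩ hne
    fun p hp => (h p hp).eventually_natCast_mul_norm_le hu one_lt_two
  obtain ⟨p, hp, hdet⟩ := exists_mem_forall_det_fderiv_iterate_ne_zero α hV hVne
  have hfderiv : (fun n => fderiv ℂ (cubicMap α)^[n] p) =O[atTop]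
      fun n : ℕ => 2 * (n : ℝ) ^ (-1 : ℝ) := by
    refine fderiv_isBigO_of_norm_le (hV.mem_nhds hp)
      (fun n => (hdiff.iterate n).differentiableOn) ?_
    filter_upwards [eventually_ge_atTop N, eventually_gt_atTop 0] with n hn hpos q hq
    rw [Real.rpow_neg_one, ← div_eq_mul_inv, le_div_iff₀' (Nat.cast_pos.2 hpos)]
    exact hN n hn q hq
  have hdet_le : (fun n => (fderiv ℂ (cubicMap α)^[n] p).det) =O[atTop]
      fun n : ℕ => (n : ℝ) ^ (-2 : ℝ) := by
    refine (det_isBigO_sq (hfderiv.trans (isBigO_const_mul_self _ _ _))).congr_right fun n => ?_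
    rw [← Real.rpow_mul_natCast n.cast_nonneg]
    norm_num
  have hdet_ge := natCast_rpow_neg_isBigO_det_fderiv_iterate (s := 3 / 2) hu (h p (hVΩ hp)) hdet
    (by norm_num)
  refine (natCast_rpow_isLittleO_rpow (by norm_num : (-2 : ℝ) < -(3 / 2))).not_isBigO ?_
    (hdet_ge.trans hdet_le)
  exact ((eventually_gt_atTop 0).mono fun n hn =>
    (Real.rpow_pos_of_pos (Nat.cast_pos.2 hn) _).ne').frequently

end CubicMap

theorem isOrbitAlong_of_tendsto_smul {α : ℂ} {p v : ℂ × ℂ} {c : ℕ → ℂ}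
    (h₀ : Tendsto (fun n => (cubicMap α)^[n] p) atTop (𝓝 0)) (hc : ∀ n, c n ≠ 0)
    (hcv : Tendsto (fun n => c n • (cubicMap α)^[n] p) atTop (𝓝 v)) (hv : v.1 ≠ 0) :
    IsOrbitAlong α (v.2 / v.1) (fun n => ((cubicMap α)^[n] p).1)
      fun n => ((cubicMap α)^[n] p).2 where
  fst_succ n := by rw [Function.iterate_succ_apply']; rfl
  snd_succ n := by rw [Function.iterate_succ_apply']; rfl
  fst_ne_zero := (hcv.fst_nhds.eventually_ne hv).mono fun _ hn => right_ne_zero_of_mul hn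
  tendsto_fst := h₀.fst_nhds
  tendsto_slope := (hcv.snd_nhds.div hcv.fst_nhds hv).congr fun n => mul_div_mul_left _ _ (hc n)

theorem fst_ne_zero_of_tendsto_smul {α : ℂ} {p v : ℂ × ℂ} {c : ℕ → ℂ}
    (h₀ : Tendsto (fun n => (cubicMap α)^[n] p) atTop (𝓝 0)) (hc : ∀ n, c n ≠ 0)
    (hcv : Tendsto (fun n => c n • (cubicMap α)^[n] p) atTop (𝓝 v)) (hv : v ≠ 0) : v.1 ≠ 0 := by
  intro hv₁
  have hv₂ : v.2 ≠ 0 := fun hv₂ => hv (Prod.ext hv₁ hv₂)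
  have hslope := (hcv.fst_nhds.div hcv.snd_nhds hv₂).congr fun n => mul_div_mul_left _ _ (hc n)
  rw [hv₁, zero_div] at hslope
  refine not_tendsto_fst_div_snd_zero (α := α) (fun n => ?_) (fun n => ?_)
    ((hcv.snd_nhds.eventually_ne hv₂).mono fun _ hn => right_ne_zero_of_mul hn) h₀.snd_nhds hslope
  all_goals rw [Function.iterate_succ_apply']; rfl

/-- For `h(x,y) = (x - y² + a x³, y - xy)` with real `a > 0`, there is no domain of attraction
to the origin along any direction `[v] ∈ ℙ¹(ℂ)`.  Convergence of the projective classes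
`[hⁿ(p)] → [v]` is expressed by the existence of nonzero scalars `c n` with
`c n • hⁿ(p) → v`. -/
theorem h_no_domain_of_attraction_along_any_direction (a : ℝ) (ha : 0 < a)
    (h : ℂ × ℂ → ℂ × ℂ)
    (hh : h = fun q : ℂ × ℂ => (q.1 - q.2 ^ 2 + (a : ℂ) * q.1 ^ 3, q.2 - q.1 * q.2)) :
    ∀ v : ℂ × ℂ, v ≠ 0 →
      ¬ ∃ Ω : Set (ℂ × ℂ), Ω.Nonempty ∧ IsOpen Ω ∧
        ∀ p ∈ Ω,
          Tendsto (fun n => h^[n] p) atTop (𝓝 (0, 0)) ∧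
          (∀ᶠ n in atTop, h^[n] p ≠ (0, 0)) ∧
          ∃ c : ℕ → ℂ, (∀ n, c n ≠ 0) ∧
            Tendsto (fun n => c n • h^[n] p) atTop (𝓝 v) := by
  rintro v hv ⟨Ω, hne, hΩ, hattr⟩
  obtain rfl : h = cubicMap a := hh
  have horbit : ∀ p ∈ Ω, IsOrbitAlong a (v.2 / v.1) (fun n => ((cubicMap a)^[n] p).1)
      fun n => ((cubicMap a)^[n] p).2 := by
    intro p hp
    obtain ⟨h₀, -, c, hc, hcv⟩ := hattr p hp
    exact isOrbitAlong_of_tendsto_smul h₀ hc hcv (fst_ne_zero_of_tendsto_smul h₀ hc hcv hv)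
  obtain ⟨p, hp, hy⟩ := exists_mem_forall_iterate_snd_ne_zero a hΩ hne
  rcases (horbit p hp).eq_zero_or_sq_eq_one with hu | hu
  · obtain ⟨n, hn⟩ := (hu ▸ horbit p hp).exists_snd_eq_zero ha
    exact hy n hn
  · exact not_forall_isOrbitAlong_of_sq_eq_one hu hΩ hne horbit
end
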